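/- arXiv:1902.05882 — 6 statements merged into one kernel-verified Lean document; each statement's English description precedes it below -/
import Mathlib

section
/- For every sufficiently large n there exists a 2-edge-coloured graph G on n vertices with δ(G) ≥ n/2 + log n/(16·log log n) whose vertex set cannot be partitioned into fewer than log n/(32·log log n) vertex-disjoint monochromatic cycles. -/
/-!
STATEMENT 1: For every sufficiently large `n` there exists a 2-edge-coloured graph `G`
on `n` vertices with `δ(G) ≥ n/2 + log n/(16·log log n)` whose vertex set cannot be
partitioned into fewer than `log n/(32·log log n)` vertex-disjoint monochromatic cycles.
-/

namespace Paper

variable {V : Type*}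

/-- `S` is the vertex set of a monochromatic proper cycle of `G` under the colouring `c`. -/
def IsMonoProperCycle {r : ℕ} (G : SimpleGraph V) (c : Sym2 V → Fin r) (S : Set V) : Prop :=
  ∃ (i : Fin r) (v : V) (w : G.Walk v v), w.IsCycle ∧ (∀ e ∈ w.edges, c e = i) ∧
    S = {x | x ∈ w.support}

/-- `S` is a (possibly degenerate) monochromatic cycle: the empty set, a single vertex,
a single edge, or a monochromatic proper cycle. -/
def IsMonoCycle {r : ℕ} (G : SimpleGraph V) (c : Sym2 V → Fin r) (S : Set V) : Prop :=
  S = ∅ ∨ (∃ v, S = {v}) ∨ (∃ u v, G.Adj u v ∧ S = {u, v}) ∨ IsMonoProperCycle G c S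

/-- The vertex set of `G` can be partitioned into at most `k` vertex-disjoint
monochromatic cycles. -/
def MonoCyclePartition {r : ℕ} (G : SimpleGraph V) (c : Sym2 V → Fin r) (k : ℕ) : Prop :=
  ∃ f : Fin k → Set V,
    (∀ i j : Fin k, i ≠ j → Disjoint (f i) (f j)) ∧
    (⋃ i, f i) = Set.univ ∧
    ∀ i, IsMonoCycle G c (f i)

open SimpleGraph Finset

/-- A walk without repeated edges splits at each of its edges into two walks avoiding that edge. -/
lemma exists_split_of_mem_edges {G : SimpleGraph V} {e : Sym2 V} {x y : V} (w : G.Walk x y)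
    (hw : w.edges.Nodup) (he : e ∈ w.edges) :
    ∃ (a b : V) (p : G.Walk x a) (q : G.Walk b y), s(a, b) = e ∧
      p.length + q.length + 1 = w.length ∧ (∀ f ∈ p.edges, f ∈ w.edges ∧ f ≠ e) ∧
      ∀ f ∈ q.edges, f ∈ w.edges ∧ f ≠ e := by
  induction w with
  | nil => simp at he
  | @cons x z y h w ih =>
    rw [Walk.edges_cons, List.nodup_cons] at hw
    by_cases hxz : e = s(x, z)
    · subst hxz
      refine ⟨x, z, .nil, w, rfl, by simp, by simp, fun f hf => ⟨by simp [hf], ?_⟩⟩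
      rintro rfl
      exact hw.1 hf
    · have he' : e ∈ w.edges := by simpa [hxz] using he
      obtain ⟨a, b, p, q, hab, hl, hp, hq⟩ := ih hw.2 he'
      refine ⟨a, b, .cons h p, q, hab, by simp only [Walk.length_cons]; omega, fun f hf => ?_,
        fun f hf => ⟨by simp [(hq f hf).1], (hq f hf).2⟩⟩
      rw [Walk.edges_cons, List.mem_cons] at hf
      rcases hf with rfl | hf
      · exact ⟨by simp, fun h => hxz h.symm⟩
      · exact ⟨by simp [(hp f hf).1], (hp f hf).2⟩

/-- Joining two vertices that are far apart creates no short cycle. -/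
lemma lt_length_of_isCycle_sup_edge {H : SimpleGraph V} {g : ℕ} {u w : V}
    (hH : ∀ (v : V) (p : H.Walk v v), p.IsCycle → g < p.length)
    (hfar : ∀ p : H.Walk u w, g < p.length) (v : V) (p : (H ⊔ edge u w).Walk v v)
    (hp : p.IsCycle) : g < p.length := by
  have key : ∀ f ∈ p.edges, f ≠ s(u, w) → f ∈ H.edgeSet := by
    intro f hf hne
    have := p.edges_subset_edgeSet hf
    induction f with
    | _ a b =>
      rw [mem_edgeSet, sup_adj, adj_edge] at this
      rcases this with h | h
      · exact h
      · exact absurd h.1.symm hne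
  by_cases he : s(u, w) ∈ p.edges
  · obtain ⟨a, b, q, r, hab, hl, hq, hr⟩ := exists_split_of_mem_edges p hp.edges_nodup he
    have hmem : ∀ f ∈ (r.append q).edges, f ∈ H.edgeSet := by
      intro f hf
      rw [Walk.edges_append, List.mem_append] at hf
      rcases hf with hf | hf
      · exact key f (hr f hf).1 (hr f hf).2
      · exact key f (hq f hf).1 (hq f hf).2
    have hlen : ((r.append q).transfer H hmem).length + 1 = p.length := by
      rw [Walk.length_transfer, Walk.length_append]; omega
    rcases Sym2.eq_iff.1 hab with ⟨rfl, rfl⟩ | ⟨rfl, rfl⟩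
    · have := hfar ((r.append q).transfer H hmem).reverse
      rw [Walk.length_reverse] at this
      omega
    · have := hfar ((r.append q).transfer H hmem)
      omega
  · have hmem : ∀ f ∈ p.edges, f ∈ H.edgeSet :=
      fun f hf => key f hf (by rintro rfl; exact he hf)
    have := hH v _ (hp.transfer hmem)
    rwa [Walk.length_transfer] at this

open Classical in
/-- Balls in a graph of maximum degree `d` grow at most like powers of `d + 1`. -/
lemma card_filter_exists_walk_le [Fintype V] {H : SimpleGraph V} {d : ℕ}
    (hd : ∀ v, (H.neighborSet v).ncard ≤ d) (j : ℕ) (u : V) :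
    #{w | ∃ p : H.Walk u w, p.length ≤ j} ≤ (d + 1) ^ j := by
  induction j generalizing u with
  | zero =>
    refine (Finset.card_le_card (t := {u}) fun w hw => ?_).trans (by simp)
    obtain ⟨p, hp⟩ := (Finset.mem_filter.1 hw).2
    exact Finset.mem_singleton.2 (Walk.eq_of_length_eq_zero (Nat.le_zero.1 hp)).symm
  | succ j ih =>
    have hsub : ({w | ∃ p : H.Walk u w, p.length ≤ j + 1} : Finset V) ⊆
        {u} ∪ (H.neighborFinset u).biUnion fun x => {w | ∃ p : H.Walk x w, p.length ≤ j} := by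
      intro w hw
      obtain ⟨p, hp⟩ := (Finset.mem_filter.1 hw).2
      cases p with
      | nil => simp
      | @cons _ x _ h q =>
        refine Finset.mem_union_right _ (Finset.mem_biUnion.2 ⟨x, by simpa using h, ?_⟩)
        rw [Walk.length_cons] at hp
        exact Finset.mem_filter.2 ⟨Finset.mem_univ _, q, by omega⟩
    calc _ ≤ _ := Finset.card_le_card hsub
      _ ≤ 1 + #(H.neighborFinset u) * (d + 1) ^ j := by
        refine (Finset.card_union_le _ _).trans (Nat.add_le_add (by simp) ?_)
        exact Finset.card_biUnion_le_card_mul _ _ _ fun x _ => ih x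
      _ ≤ (d + 1) ^ j + d * (d + 1) ^ j := by
        gcongr
        · exact Nat.one_le_pow _ _ (by omega)
        · rw [neighborFinset, ← Set.ncard_eq_toFinset_card']
          exact hd u
      _ = (d + 1) ^ (j + 1) := by ring

lemma ncard_neighborSet_sup_edge [Finite V] {H : SimpleGraph V} {u w : V} (huw : u ≠ w)
    (hn : ¬ H.Adj u w) (v : V) [Decidable (v = u)] [Decidable (v = w)] :
    ((H ⊔ edge u w).neighborSet v).ncard =
      (H.neighborSet v).ncard + (if v = u then 1 else 0) + if v = w then 1 else 0 := by
  have hn' : ¬ H.Adj w u := fun h => hn h.symm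
  by_cases hu : v = u
  · subst hu
    rw [show (H ⊔ edge v w).neighborSet v = insert w (H.neighborSet v) by
      ext x; simp only [mem_neighborSet, sup_adj, edge_adj, Set.mem_insert_iff]; grind]
    rw [Set.ncard_insert_of_notMem (by simpa using hn)]
    simp [huw]
  · by_cases hw : v = w
    · subst hw
      rw [show (H ⊔ edge u v).neighborSet v = insert u (H.neighborSet v) by
        ext x; simp only [mem_neighborSet, sup_adj, edge_adj, Set.mem_insert_iff]; grind]
      rw [Set.ncard_insert_of_notMem (by simpa using hn')]
      simp [hu]
    · rw [show (H ⊔ edge u w).neighborSet v = H.neighborSet v by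
        ext x; simp only [mem_neighborSet, sup_adj, edge_adj]; grind]
      simp [hu, hw]

open Classical in
/-- A set `A` of more than `2 * (4 * D + 1) ^ g` vertices carries a graph of minimum degree at
least `D` all of whose cycles are longer than `g`. -/
lemma exists_large_girth [Fintype V] (A : Finset V) (D g : ℕ) (hg : 1 ≤ g)
    (hA : 2 * (4 * D + 1) ^ g < #A) :
    ∃ H : SimpleGraph V, (∀ u v, H.Adj u v → u ∈ A) ∧ (∀ u ∈ A, D ≤ (H.neighborSet u).ncard) ∧
      ∀ (v : V) (p : H.Walk v v), p.IsCycle → g < p.length := by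
  let S : Set (SimpleGraph V) := {H | (∀ u v, H.Adj u v → u ∈ A) ∧
    (∀ (v : V) (p : H.Walk v v), p.IsCycle → g < p.length) ∧
    (∀ v, (H.neighborSet v).ncard ≤ 4 * D) ∧
    ∑ v ∈ A, (H.neighborSet v).ncard ≤ 2 * ∑ v ∈ A, min ((H.neighborSet v).ncard) D}
  have hbot : (⊥ : SimpleGraph V) ∈ S := by
    refine ⟨by simp, fun v p hp => ?_, by simp, by simp⟩
    exact absurd hp (isAcyclic_bot p)
  obtain ⟨H, ⟨hsub, hcyc, hmax, hsum⟩, hH⟩ := (Set.toFinite S).exists_maximal ⟨⊥, hbot⟩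
  refine ⟨H, hsub, fun u hu => ?_, hcyc⟩
  by_contra! hlt
  have hlow : 2 * #{v ∈ A | 4 * D ≤ (H.neighborSet v).ncard} ≤ #A := by
    have h1 : #{v ∈ A | 4 * D ≤ (H.neighborSet v).ncard} * (4 * D) ≤
        ∑ v ∈ A, (H.neighborSet v).ncard :=
      calc _ ≤ ∑ v ∈ A with 4 * D ≤ (H.neighborSet v).ncard, (H.neighborSet v).ncard := by
            rw [← smul_eq_mul]
            exact Finset.card_nsmul_le_sum _ _ _ fun v hv => (Finset.mem_filter.1 hv).2
        _ ≤ _ := Finset.sum_le_sum_of_subset (Finset.filter_subset _ _)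
    have h2 : ∑ v ∈ A, min ((H.neighborSet v).ncard) D ≤ #A * D := by
      rw [← smul_eq_mul]
      exact Finset.sum_le_card_nsmul _ _ _ fun v _ => min_le_right _ _
    have hD : 0 < 2 * D := by omega
    refine Nat.le_of_mul_le_mul_right ?_ hD
    nlinarith
  obtain ⟨w, hwA, hw⟩ : ∃ w ∈ A, w ∉ ({v ∈ A | 4 * D ≤ (H.neighborSet v).ncard} : Finset V) ∪
      ({w | ∃ p : H.Walk u w, p.length ≤ g} : Finset V) := by
    by_contra! hcon
    have h1 := Finset.card_le_card hcon
    have h2 := Finset.card_union_le ({v ∈ A | 4 * D ≤ (H.neighborSet v).ncard} : Finset V)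
      ({w | ∃ p : H.Walk u w, p.length ≤ g} : Finset V)
    have h3 := card_filter_exists_walk_le hmax g u
    omega
  simp only [Finset.mem_union, Finset.mem_filter, hwA, Finset.mem_univ, true_and, not_or,
    not_le, not_exists] at hw
  obtain ⟨hwdeg, hfar⟩ := hw
  have huw : u ≠ w := by
    rintro rfl
    simpa using hfar .nil
  have hnadj : ¬ H.Adj u w := fun h => by
    have := hfar (.cons h .nil)
    simp at this
    omega
  have hmem : H ⊔ edge u w ∈ S := by
    refine ⟨fun a b hab => ?_, lt_length_of_isCycle_sup_edge hcyc hfar, fun v => ?_, ?_⟩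
    · rw [sup_adj, edge_adj] at hab
      rcases hab with h | ⟨⟨rfl, -⟩ | ⟨rfl, -⟩, -⟩
      exacts [hsub a b h, hu, hwA]
    · rw [ncard_neighborSet_sup_edge huw hnadj]
      have := hmax v
      split_ifs with h1 h2 h2 <;> subst_vars <;> omega
    · have h1 : ∑ v ∈ A, ((H ⊔ edge u w).neighborSet v).ncard =
          ∑ v ∈ A, (H.neighborSet v).ncard + 2 := by
        simp only [ncard_neighborSet_sup_edge huw hnadj, Finset.sum_add_distrib]
        simp [hu, hwA]
      have h2 : ∑ v ∈ A, min ((H.neighborSet v).ncard) D + 1 ≤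
          ∑ v ∈ A, min (((H ⊔ edge u w).neighborSet v).ncard) D := by
        calc _ = ∑ v ∈ A, (min ((H.neighborSet v).ncard) D + if v = u then 1 else 0) := by
              simp [Finset.sum_add_distrib, hu]
          _ ≤ _ := by
              refine Finset.sum_le_sum fun v _ => ?_
              rw [ncard_neighborSet_sup_edge huw hnadj]
              split_ifs with h1 h2 h2 <;> subst_vars <;> omega
      omega
  have := hH hmem le_sup_left
  exact hnadj (this (by simp [edge_adj, huw]))

/-- The excess of vertices inside `A` over vertices outside `A`, as a vertex weighting. -/
def sideSign (A : Finset V) [DecidableEq V] (v : V) : ℤ := if v ∈ A then 1 else -1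

/-- Along a walk that keeps crossing between `A` and its complement the signs telescope. -/
lemma two_mul_sum_sideSign_support_tail [DecidableEq V] {G : SimpleGraph V} {A : Finset V}
    {u v : V} (w : G.Walk u v) (hw : ∀ a b, s(a, b) ∈ w.edges → (a ∈ A ↔ b ∉ A)) :
    2 * (w.support.tail.map (sideSign A)).sum = sideSign A v - sideSign A u := by
  induction w with
  | nil => simp
  | @cons u x v h w ih =>
    have hx := hw u x (by simp)
    have := ih fun a b hab => hw a b (by simp [hab])
    have hsign : sideSign A u = - sideSign A x := by
      by_cases hxA : x ∈ A <;> simp_all [sideSign]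
    rw [Walk.support_cons, List.tail_cons, ← Walk.cons_tail_support, List.map_cons, List.sum_cons,
      mul_add, this, hsign]
    ring

/-- The graph `H` inside `A` together with all edges between `A` and its complement. -/
def addCrossing (H : SimpleGraph V) (A : Finset V) : SimpleGraph V where
  Adj u v := H.Adj u v ∨ (u ∈ A ∧ v ∉ A) ∨ (u ∉ A ∧ v ∈ A)
  symm := ⟨fun u v h => by
    rcases h with h | h | h
    · exact .inl h.symm
    · exact .inr (.inr h.symm)
    · exact .inr (.inl h.symm)⟩
  loopless := ⟨fun u h => by
    rcases h with h | h | h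
    · exact H.irrefl h
    · exact h.2 h.1
    · exact h.1 h.2⟩

open Classical in
/-- Colour `1` for the edges inside `A`, colour `0` for the others. -/
noncomputable def insideColour (A : Finset V) (e : Sym2 V) : Fin 2 :=
  if ∀ x ∈ e, x ∈ A then 1 else 0

lemma setOf_mem_support_eq [DecidableEq V] {G : SimpleGraph V} {v : V} {w : G.Walk v v}
    (hw : w.IsCycle) : {x | x ∈ w.support} = (↑w.support.tail.toFinset : Set V) := by
  ext x
  simp only [Set.mem_ofPred_eq, List.coe_toFinset]
  refine ⟨fun hx => ?_, List.mem_of_mem_tail⟩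
  rcases w.mem_support_iff.1 hx with rfl | hx
  · exact Walk.end_mem_tail_support hw.not_nil
  · exact hx

open Classical in
/-- Each monochromatic cycle is almost balanced, or has an excess larger than `g`. -/
lemma sum_sideSign_of_isMonoCycle [Fintype V] [DecidableEq V] {H : SimpleGraph V}
    {A : Finset V} {g : ℕ}
    (hH : ∀ u v, H.Adj u v → u ∈ A)
    (hcyc : ∀ (v : V) (p : H.Walk v v), p.IsCycle → g < p.length) {S : Set V}
    (hS : IsMonoCycle (addCrossing H A) (insideColour A) S) :
    (-2 ≤ ∑ x with x ∈ S, sideSign A x ∧ ∑ x with x ∈ S, sideSign A x ≤ 2) ∨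
      (g : ℤ) < ∑ x with x ∈ S, sideSign A x := by
  have hb : ∀ x, -1 ≤ sideSign A x ∧ sideSign A x ≤ 1 := fun x => by
    unfold sideSign; split_ifs <;> simp
  have hcoe : ∀ (U : Set V) (T : Finset V), U = ↑T →
      ∑ x with x ∈ U, sideSign A x = ∑ x ∈ T, sideSign A x := by
    rintro _ T rfl
    exact Finset.sum_congr (by ext; simp) fun _ _ => rfl
  rcases hS with rfl | ⟨v, rfl⟩ | ⟨u, v, huv, rfl⟩ | ⟨i, v, w, hw, hc, rfl⟩
  · simp
  · left
    rw [hcoe _ {v} (by simp), Finset.sum_singleton]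
    have := hb v
    omega
  · left
    rw [hcoe _ {u, v} (by simp), Finset.sum_pair huv.ne]
    have := hb u
    have := hb v
    omega
  · rw [hcoe _ _ (setOf_mem_support_eq hw), List.sum_toFinset _ hw.support_nodup]
    by_cases hi : i = 1
    · right
      subst hi
      have hin : ∀ e ∈ w.edges, ∀ x ∈ e, x ∈ A := by
        intro e he
        by_contra hcon
        have := hc e he
        simp [insideColour, hcon] at this
      have hmem : ∀ e ∈ w.edges, e ∈ H.edgeSet := by
        intro e he
        have hadj := w.edges_subset_edgeSet he
        have hA := hin e he
        induction e with
        | _ a b =>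
          have ha := hA a (by simp)
          have hb := hA b (by simp)
          rcases hadj with h | h | h
          · exact h
          · exact absurd hb h.2
          · exact absurd ha h.1
      have hlen := hcyc v _ (hw.transfer hmem)
      rw [Walk.length_transfer] at hlen
      have hone : ∀ x ∈ w.support.tail, sideSign A x = 1 := by
        intro x hx
        obtain ⟨e, he, hxe⟩ := (Walk.mem_support_iff_exists_mem_edges_of_not_nil hw.not_nil).1
          (List.mem_of_mem_tail hx)
        simp [sideSign, hin e he x hxe]
      rw [List.map_congr_left hone]
      simp only [List.map_const', List.sum_replicate, List.length_tail, Walk.length_support]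
      simpa using hlen
    · left
      have hcross : ∀ a b, s(a, b) ∈ w.edges → (a ∈ A ↔ b ∉ A) := by
        intro a b hab
        have hcol := hc _ hab
        have hadj : (addCrossing H A).Adj a b := w.adj_of_mem_edges hab
        have hnot : ¬ (a ∈ A ∧ b ∈ A) := by
          intro h
          apply hi
          rw [← hcol]
          simp [insideColour, h]
        rcases hadj with h | h | h
        · exact absurd ⟨hH a b h, hH b a h.symm⟩ hnot
        · tauto
        · tauto
      have hzero : 2 * (w.support.tail.map fun x => sideSign A x).sum = _ :=
        two_mul_sum_sideSign_support_tail w hcross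
      omega

open Classical in
lemma sum_eq_sum_parts [Fintype V] {k : ℕ} {f : Fin k → Set V}
    (hd : ∀ i j : Fin k, i ≠ j → Disjoint (f i) (f j)) (hu : (⋃ i, f i) = Set.univ)
    (σ : V → ℤ) : ∑ x, σ x = ∑ i, ∑ x with x ∈ f i, σ x := by
  have hex : ∀ x, ∃ i, x ∈ f i := fun x => Set.mem_iUnion.1 (hu ▸ Set.mem_univ x)
  choose h hh using hex
  rw [← Finset.sum_fiberwise Finset.univ h]
  refine Finset.sum_congr rfl fun i _ => Finset.sum_congr (Finset.ext fun x => ?_) fun _ _ => rfl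
  simp only [Finset.mem_filter, Finset.mem_univ, true_and]
  refine ⟨fun hx => hx ▸ hh x, fun hx => ?_⟩
  by_contra hne
  exact Set.disjoint_left.1 (hd _ _ hne) (hh x) hx

open Classical in
/-- If `A` exceeds its complement by more than twice the number of cycles, but all cycles inside
`A` are too long, then there is no partition into that few monochromatic cycles. -/
lemma not_monoCyclePartition_addCrossing [Fintype V] [DecidableEq V] {H : SimpleGraph V}
    {A : Finset V} {g k : ℕ}
    (hH : ∀ u v, H.Adj u v → u ∈ A)
    (hcyc : ∀ (v : V) (p : H.Walk v v), p.IsCycle → g < p.length)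
    (hlow : #Aᶜ + 2 * k < #A) (hup : #A + 2 * k ≤ #Aᶜ + g) :
    ¬ MonoCyclePartition (addCrossing H A) (insideColour A) k := by
  rintro ⟨f, hd, hu, hf⟩
  have htot : ∑ x, sideSign A x = (#A : ℤ) - #Aᶜ := by
    rw [← Finset.sum_add_sum_compl A,
      Finset.sum_congr rfl (g := fun _ => (1 : ℤ)) (fun x hx => by simp [sideSign, hx]),
      Finset.sum_congr (s₁ := Aᶜ) rfl (g := fun _ => (-1 : ℤ))
        (fun x hx => by simp [sideSign, Finset.mem_compl.1 hx])]
    simp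
    ring
  rw [sum_eq_sum_parts hd hu] at htot
  have hparts := fun i => sum_sideSign_of_isMonoCycle hH hcyc (hf i)
  have hge : ∀ i, -2 ≤ ∑ x with x ∈ f i, sideSign A x := fun i => by
    have := hparts i
    omega
  by_cases hlong : ∃ i, (g : ℤ) < ∑ x with x ∈ f i, sideSign A x
  · obtain ⟨i, hi⟩ := hlong
    have h1 : ∑ j ∈ Finset.univ.erase i, (-2 : ℤ) ≤
        ∑ j ∈ Finset.univ.erase i, ∑ x with x ∈ f j, sideSign A x :=
      Finset.sum_le_sum fun j _ => hge j
    rw [← Finset.add_sum_erase _ _ (Finset.mem_univ i)] at htot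
    have h2 : (#(Finset.univ.erase i) : ℤ) ≤ k := by
      exact_mod_cast (Finset.card_erase_le).trans (by simp)
    rw [Finset.sum_const, nsmul_eq_mul] at h1
    omega
  · have h1 : ∑ i, ∑ x with x ∈ f i, sideSign A x ≤ ∑ _i : Fin k, (2 : ℤ) := by
      refine Finset.sum_le_sum fun i _ => ?_
      rcases hparts i with h | h
      · exact h.2
      · exact absurd ⟨i, h⟩ hlong
    simp at h1
    omega

/-- The graph and colouring for a vertex set split into `A` and its slightly smaller
complement. -/
lemma exists_graph_of_split [Fintype V] [DecidableEq V] (A : Finset V) (M : ℕ)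
    (hlow : #Aᶜ + 2 * M ≤ #A) (hup : #A ≤ #Aᶜ + 2 * M + 1)
    (hA : 2 * (8 * M + 5) ^ (3 * M + 1) < #A) :
    ∃ (G : SimpleGraph V) (c : Sym2 V → Fin 2),
      (∀ v, Fintype.card V + 2 * M ≤ 2 * (G.neighborSet v).ncard) ∧
      ∀ k : ℕ, 2 * k < M → ¬ MonoCyclePartition G c k := by
  obtain ⟨H, hH, hdeg, hcyc⟩ := exists_large_girth A (2 * M + 1) (3 * M + 1) (by omega)
    (by rwa [show 4 * (2 * M + 1) + 1 = 8 * M + 5 by ring])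
  refine ⟨addCrossing H A, insideColour A, fun v => ?_, fun k hk =>
    not_monoCyclePartition_addCrossing hH hcyc (by omega) (by omega)⟩
  have hcard := Finset.card_add_card_compl A
  by_cases hv : v ∈ A
  · have hsub : H.neighborSet v ∪ ↑Aᶜ ⊆ (addCrossing H A).neighborSet v := by
      rintro x (hx | hx)
      · exact .inl hx
      · exact .inr (.inl ⟨hv, by simpa using hx⟩)
    have hdisj : Disjoint (H.neighborSet v) ↑Aᶜ := by
      refine Set.disjoint_left.2 fun x hx hxA => ?_
      simp only [Finset.coe_compl, Set.mem_compl_iff, Finset.mem_coe] at hxA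
      exact hxA (hH x v (SimpleGraph.Adj.symm hx))
    have h1 := Set.ncard_le_ncard hsub
    rw [Set.ncard_union_eq hdisj, Set.ncard_coe_finset] at h1
    have := hdeg v hv
    omega
  · have hsub : ↑A ⊆ (addCrossing H A).neighborSet v := fun x hx => .inr (.inr ⟨hv, hx⟩)
    have h1 := Set.ncard_le_ncard hsub
    rw [Set.ncard_coe_finset] at h1
    omega

lemma exists_graph_fin (n M : ℕ) (h : 4 * (8 * M + 5) ^ (3 * M + 1) < n) :
    ∃ (G : SimpleGraph (Fin n)) (c : Sym2 (Fin n) → Fin 2),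
      (∀ v, n + 2 * M ≤ 2 * (G.neighborSet v).ncard) ∧
      ∀ k : ℕ, 2 * k < M → ¬ MonoCyclePartition G c k := by
  have hM : 8 * M + 5 ≤ (8 * M + 5) ^ (3 * M + 1) := Nat.le_self_pow (by omega) _
  obtain ⟨A, -, hA⟩ := Finset.exists_subset_card_eq (s := (Finset.univ : Finset (Fin n)))
    (n := (n + 2 * M + 1) / 2) (by rw [Finset.card_fin]; omega)
  have hcard := Finset.card_add_card_compl A
  rw [Fintype.card_fin] at hcard
  simpa using exists_graph_of_split A M (by omega) (by omega) (by omega)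

/-- The numerical choice of parameters is admissible for large `n`. -/
lemma eventually_pow_lt : ∀ᶠ n : ℕ in Filter.atTop,
    4 * (8 * ⌈Real.log n / (16 * Real.log (Real.log n))⌉₊ + 5) ^
      (3 * ⌈Real.log n / (16 * Real.log (Real.log n))⌉₊ + 1) < n := by
  have hlog : Filter.Tendsto (fun n : ℕ => Real.log n) Filter.atTop Filter.atTop :=
    Real.tendsto_log_atTop.comp tendsto_natCast_atTop_atTop
  have hlittle : ∀ᶠ x : ℝ in Filter.atTop, Real.log x ≤ x / 64 := by
    filter_upwards [Real.isLittleO_log_id_atTop.bound (show (0 : ℝ) < 1 / 64 by norm_num),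
      Filter.eventually_ge_atTop 1] with x hx hx1
    rw [Real.norm_of_nonneg (Real.log_nonneg hx1), id, Real.norm_of_nonneg (by linarith)] at hx
    linarith
  filter_upwards [hlog.eventually hlittle, hlog.eventually_ge_atTop (Real.exp 1),
    hlog.eventually_ge_atTop 26, Filter.eventually_gt_atTop 0] with n hsmall he h26 hn
  set x := Real.log n with hx
  have hl1 : 1 ≤ Real.log x := by
    rw [Real.le_log_iff_exp_le (by linarith)]
    exact he
  set l := Real.log x with hl
  have hL : x / (16 * l) = x / l / 16 := by field_simp
  rw [hL]
  have hL64 : 64 ≤ x / l := by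
    rw [le_div_iff₀ (by linarith)]
    linarith
  have hLx : x / l ≤ x := div_le_self (by linarith) hl1
  have hceil := (Nat.ceil_lt_add_one (show 0 ≤ x / l / 16 by linarith)).le
  set M := ⌈x / l / 16⌉₊
  have hpow : ((8 * M + 5 : ℕ) : ℝ) ^ (3 * M + 1) ≤ Real.exp (x / 4) := by
    calc ((8 * M + 5 : ℕ) : ℝ) ^ (3 * M + 1) ≤ x ^ (3 * M + 1) := by
          gcongr
          push_cast
          linarith
      _ = x ^ ((3 * M + 1 : ℕ) : ℝ) := (Real.rpow_natCast _ _).symm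
      _ ≤ x ^ (x / l / 4) := by
          apply Real.rpow_le_rpow_of_exponent_le (by linarith)
          push_cast
          linarith
      _ = Real.exp (x / 4) := by
          rw [Real.rpow_def_of_pos (by linarith), ← hl]
          congr 1
          field_simp
  have hexp : (n : ℝ) = Real.exp (x / 4) * Real.exp (3 * x / 4) := by
    rw [← Real.exp_add, show x / 4 + 3 * x / 4 = x by ring, hx,
      Real.exp_log (by exact_mod_cast hn)]
  have hbig : 4 < Real.exp (3 * x / 4) := by
    have := Real.add_one_le_exp (3 * x / 4)
    linarith
  have hreal : (4 : ℝ) * ((8 * M + 5 : ℕ) : ℝ) ^ (3 * M + 1) < n := by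
    rw [hexp]
    nlinarith [Real.exp_pos (x / 4)]
  exact_mod_cast hreal

theorem min_degree_lower_bound_construction :
    ∃ n₀ : ℕ, ∀ n : ℕ, n₀ ≤ n →
      ∃ (G : SimpleGraph (Fin n)) (c : Sym2 (Fin n) → Fin 2),
        (∀ v : Fin n,
          (n : ℝ) / 2 + Real.log n / (16 * Real.log (Real.log n))
            ≤ ((G.neighborSet v).ncard : ℝ)) ∧
        ∀ k : ℕ, (k : ℝ) < Real.log n / (32 * Real.log (Real.log n)) →
          ¬ MonoCyclePartition G c k := by
  obtain ⟨n₀, hn₀⟩ := Filter.eventually_atTop.1 eventually_pow_lt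
  refine ⟨n₀, fun n hn => ?_⟩
  obtain ⟨G, c, hdeg, hpart⟩ := exists_graph_fin n _ (hn₀ n hn)
  have hceil := Nat.le_ceil (Real.log n / (16 * Real.log (Real.log n)))
  refine ⟨G, c, fun v => ?_, fun k hk => hpart k ?_⟩
  · have h : (n : ℝ) + 2 * ⌈Real.log n / (16 * Real.log (Real.log n))⌉₊ ≤
        2 * ((G.neighborSet v).ncard : ℝ) := by exact_mod_cast hdeg v
    linarith
  · have h32 : Real.log n / (32 * Real.log (Real.log n)) =
        Real.log n / (16 * Real.log (Real.log n)) / 2 := by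
      rw [div_div]
      ring_nf
    have h : (2 : ℝ) * k < ⌈Real.log n / (16 * Real.log (Real.log n))⌉₊ := by linarith
    exact_mod_cast h

end Paper
end

section
/- Every (μ, ν)-robustly 2-matchable graph H with μ ≤ ν < 1/1000 contains a perfect 2-matching. -/
/-!
STATEMENT 5: Every `(μ, ν)`-robustly 2-matchable graph `H` with `μ ≤ ν < 1/1000`
contains a perfect 2-matching.
-/

namespace Paper

variable {V : Type*}

/-- The number of edges of `H` with both endpoints in `S`. -/
noncomputable def edgesIn (H : SimpleGraph V) (S : Set V) : ℕ :=
  {e : Sym2 V | e ∈ H.edgeSet ∧ ∀ x ∈ e, x ∈ S}.ncard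

/-- `H` is `(μ,ν)`-robustly 2-matchable of type 1. -/
def RobMat1 (H : SimpleGraph V) (μ ν : ℝ) : Prop :=
  (∀ v : V, (1 / 2 - μ) * (Nat.card V : ℝ) ≤ ((H.neighborSet v).ncard : ℝ)) ∧
  ∀ S : Set V, (1 / 2 - ν) * (Nat.card V : ℝ) ≤ (S.ncard : ℝ) →
    ν * (Nat.card V : ℝ) ^ 2 ≤ (edgesIn H S : ℝ)

/-- `H` is `(μ,ν)`-robustly 2-matchable of type 2, witnessed by the bipartition `{A,B}`. -/
def RobMat2With (H : SimpleGraph V) (μ : ℝ) (A B : Set V) : Prop :=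
  A ∪ B = Set.univ ∧ Disjoint A B ∧ A.ncard = B.ncard ∧
  (∀ u v : V, H.Adj u v → (u ∈ A ∧ v ∈ B) ∨ (u ∈ B ∧ v ∈ A)) ∧
  (∀ v : V, (1 / 32 - μ) * (Nat.card V : ℝ) ≤ ((H.neighborSet v).ncard : ℝ)) ∧
  ({v : V | ((H.neighborSet v).ncard : ℝ) < (1 / 3 - μ) * (Nat.card V : ℝ)}.ncard : ℝ)
    ≤ (1 / 64 + μ) * (Nat.card V : ℝ)

/-- `H` is `(μ,ν)`-robustly 2-matchable of type 2. -/
def RobMat2 (H : SimpleGraph V) (μ : ℝ) : Prop := ∃ A B : Set V, RobMat2With H μ A B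

/-- `H` is `(μ,ν)`-robustly 2-matchable. -/
def RobMat (H : SimpleGraph V) (μ ν : ℝ) : Prop := RobMat1 H μ ν ∨ RobMat2 H μ

/-- `ω` is a perfect `b`-matching of `H`: a nonnegative integer weight function on the
edges such that the weights at each vertex `v` sum to `b v`. -/
def IsPerfectBMatching [Fintype V] (H : SimpleGraph V) (b : V → ℕ) (ω : Sym2 V → ℕ) :
    Prop :=
  (∀ e : Sym2 V, e ∉ H.edgeSet → ω e = 0) ∧ ∀ v : V, (∑ w : V, ω s(v, w)) = b v

/-- The set of vertices of `H` with a neighbour in `S`. -/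
def neighbors (H : SimpleGraph V) (S : Set V) : Set V := {w | ∃ v ∈ S, H.Adj v w}

theorem neighborSet_subset_neighbors {H : SimpleGraph V} {S : Set V} {v : V} (hv : v ∈ S) :
    H.neighborSet v ⊆ neighbors H S := fun _ hw => ⟨v, hv, hw⟩

theorem neighbors_mono {H : SimpleGraph V} {S T : Set V} (h : S ⊆ T) :
    neighbors H S ⊆ neighbors H T := fun _ ⟨v, hv, hw⟩ => ⟨v, h hv, hw⟩

/-- A graph satisfying Hall's condition for all vertex sets has a perfect 2-matching: the weight
of an edge counts its occurrences in an injection sending each vertex to a neighbour. -/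
theorem exists_perfectTwoMatching_of_hall [Fintype V] (H : SimpleGraph V)
    (hall : ∀ S : Set V, S.ncard ≤ (neighbors H S).ncard) :
    ∃ ω : Sym2 V → ℕ, IsPerfectBMatching H (fun _ => 2) ω := by
  classical
  obtain ⟨f, hf, hadj⟩ :=
    (Fintype.all_card_le_filter_rel_iff_exists_injective H.Adj).1 fun S => by
      have h := hall S
      rw [Set.ncard_coe_finset, Set.ncard_eq_toFinset_card'] at h
      convert h using 2
      ext w
      rw [Set.mem_toFinset]
      simp [neighbors]
  have hbij := Finite.injective_iff_bijective.1 hf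
  let g : V → V → ℕ := fun v w => (if f v = w then 1 else 0) + if f w = v then 1 else 0
  refine ⟨Sym2.lift ⟨g, fun v w => add_comm _ _⟩, fun e => ?_, fun v => ?_⟩
  · induction e with
    | _ v w =>
      intro he
      rw [SimpleGraph.mem_edgeSet] at he
      have h₁ : f v ≠ w := fun h => he (h ▸ hadj v)
      have h₂ : f w ≠ v := fun h => he (h ▸ hadj w).symm
      simp [g, h₁, h₂]
  · obtain ⟨u, rfl⟩ := hbij.2 v
    simp [g, Finset.sum_add_distrib, hf.eq_iff]

/-- If every independent set has at least as many neighbours as elements, so has every set. -/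
theorem hall_of_independent [Finite V] (H : SimpleGraph V)
    (hind : ∀ S : Set V, (∀ v ∈ S, ∀ w ∈ S, ¬ H.Adj v w) → S.ncard ≤ (neighbors H S).ncard)
    (S : Set V) : S.ncard ≤ (neighbors H S).ncard := by
  have hI := hind (S \ neighbors H S) fun v hv w hw h => hw.2 ⟨v, hv.1, h⟩
  have hsub : neighbors H (S \ neighbors H S) ⊆ neighbors H S \ S := fun w ⟨v, hv, hvw⟩ =>
    ⟨⟨v, hv.1, hvw⟩, fun hw => hv.2 ⟨w, hw, hvw.symm⟩⟩
  have hle := Set.ncard_le_ncard hsub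
  have h₁ := Set.ncard_inter_add_ncard_sdiff_eq_ncard S (neighbors H S)
  have h₂ := Set.ncard_inter_add_ncard_sdiff_eq_ncard (neighbors H S) S
  rw [Set.inter_comm] at h₂
  omega

theorem edgesIn_eq_zero_of_independent {H : SimpleGraph V} {S : Set V}
    (hS : ∀ v ∈ S, ∀ w ∈ S, ¬ H.Adj v w) : edgesIn H S = 0 := by
  have : {e : Sym2 V | e ∈ H.edgeSet ∧ ∀ x ∈ e, x ∈ S} = ∅ := by
    refine Set.eq_empty_of_forall_notMem fun e => ?_
    induction e with
    | _ v w =>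
      rintro ⟨he, hm⟩
      exact hS v (hm v (Sym2.mem_mk_left v w)) w (hm w (Sym2.mem_mk_right v w)) he
  rw [edgesIn, this, Set.ncard_empty]

theorem RobMat1.hall [Finite V] {H : SimpleGraph V} {μ ν : ℝ} (hμν : μ ≤ ν)
    (hH : RobMat1 H μ ν) (S : Set V) : S.ncard ≤ (neighbors H S).ncard := by
  refine hall_of_independent H (fun S hS => ?_) S
  by_contra! hlt
  obtain ⟨v, hv⟩ : S.Nonempty := Set.nonempty_of_ncard_ne_zero (by omega)
  have : Nonempty V := ⟨v⟩
  have hn : (0 : ℝ) < Nat.card V := by exact_mod_cast Nat.card_pos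
  have hdeg : ((H.neighborSet v).ncard : ℝ) ≤ (neighbors H S).ncard := by
    exact_mod_cast Set.ncard_le_ncard (neighborSet_subset_neighbors hv)
  have hmin := hH.1 v
  have hltR : ((neighbors H S).ncard : ℝ) < S.ncard := by exact_mod_cast hlt
  rcases le_or_gt ν 0 with hν | hν
  · have hdisj : Disjoint S (neighbors H S) :=
      Set.disjoint_left.2 fun w hw ⟨u, hu, huw⟩ => hS u hu w hw huw
    have hcard : ((S.ncard + (neighbors H S).ncard : ℕ) : ℝ) ≤ Nat.card V := by
      rw [← Set.ncard_union_eq hdisj]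
      exact_mod_cast Set.ncard_le_card _
    push_cast at hcard
    nlinarith
  · have hspan := hH.2 S (by nlinarith)
    rw [edgesIn_eq_zero_of_independent hS, Nat.cast_zero] at hspan
    exact absurd hspan (not_le.2 (by positivity))

theorem RobMat2With.symm {H : SimpleGraph V} {μ : ℝ} {A B : Set V} (h : RobMat2With H μ A B) :
    RobMat2With H μ B A := by
  obtain ⟨hU, hd, hc, hadj, hrest⟩ := h
  exact ⟨Set.union_comm A B ▸ hU, hd.symm, hc.symm, fun u v h => (hadj u v h).symm, hrest⟩

theorem RobMat2With.neighbors_subset {H : SimpleGraph V} {μ : ℝ} {A B S : Set V}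
    (h : RobMat2With H μ A B) (hS : S ⊆ A) : neighbors H S ⊆ B := by
  rintro w ⟨v, hv, hvw⟩
  rcases h.2.2.2.1 v w hvw with h' | h'
  · exact h'.2
  · exact (Set.disjoint_left.1 h.2.1 (hS hv) h'.1).elim

theorem RobMat2With.hall_left [Finite V] {H : SimpleGraph V} {μ : ℝ} {A B S : Set V}
    (hμ : μ < 1 / 1000) (h : RobMat2With H μ A B) (hS : S ⊆ A) :
    S.ncard ≤ (neighbors H S).ncard := by
  by_contra! hlt
  have hNB := h.neighbors_subset hS
  have hBA := h.symm.neighbors_subset (S := B \ neighbors H S) Set.sdiff_subset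
  obtain ⟨hU, hd, hc, -, hmin, hlow⟩ := h
  set L := {v : V | ((H.neighborSet v).ncard : ℝ) < (1 / 3 - μ) * (Nat.card V : ℝ)}
  obtain ⟨v, hv⟩ : S.Nonempty := Set.nonempty_of_ncard_ne_zero (by omega)
  have : Nonempty V := ⟨v⟩
  have hn : (0 : ℝ) < Nat.card V := by exact_mod_cast Nat.card_pos
  -- A set with fewer neighbours than elements contains a vertex of high degree.
  have hhigh : ∀ T : Set V, (neighbors H T).ncard < T.ncard →
      (1 / 3 - μ) * (Nat.card V : ℝ) ≤ (neighbors H T).ncard := by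
    intro T hT
    have hdeg : ∀ u ∈ T, ((H.neighborSet u).ncard : ℝ) ≤ (neighbors H T).ncard := fun u hu => by
      exact_mod_cast Set.ncard_le_ncard (neighborSet_subset_neighbors hu)
    obtain ⟨u, hu⟩ : T.Nonempty := Set.nonempty_of_ncard_ne_zero (by omega)
    have hTR : ((neighbors H T).ncard : ℝ) < T.ncard := by exact_mod_cast hT
    obtain ⟨x, hxT, hxL⟩ : ∃ x ∈ T, x ∉ L := by
      by_contra! hTL
      have hle : (T.ncard : ℝ) ≤ L.ncard := by exact_mod_cast Set.ncard_le_ncard hTL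
      nlinarith [hdeg u hu, hmin u]
    exact (not_lt.1 hxL).trans (hdeg x hxT)
  have hsub : neighbors H (B \ neighbors H S) ⊆ A \ S := fun w hw =>
    ⟨hBA hw, fun hwS => hw.elim fun u hu => hu.1.2 ⟨w, hwS, hu.2.symm⟩⟩
  have hle := Set.ncard_le_ncard hsub
  have hB := Set.ncard_sdiff_add_ncard_of_subset hNB
  have hA := Set.ncard_sdiff_add_ncard_of_subset hS
  have h₁ := hhigh S hlt
  have h₂ := hhigh (B \ neighbors H S) (by omega)
  have hAB : A.ncard + B.ncard = Nat.card V := by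
    rw [← Set.ncard_union_eq hd, hU, Set.ncard_univ]
  have hsum : 2 * ((neighbors H S).ncard + (neighbors H (B \ neighbors H S)).ncard)
      ≤ Nat.card V := by omega
  have hsumR : 2 * (((neighbors H S).ncard : ℝ) + (neighbors H (B \ neighbors H S)).ncard)
      ≤ Nat.card V := by exact_mod_cast hsum
  nlinarith

theorem RobMat2.hall [Finite V] {H : SimpleGraph V} {μ : ℝ} (hμ : μ < 1 / 1000)
    (hH : RobMat2 H μ) (S : Set V) : S.ncard ≤ (neighbors H S).ncard := by
  obtain ⟨A, B, h⟩ := hH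
  have hA := h.hall_left hμ (S := S ∩ A) Set.inter_subset_right
  have hB := h.symm.hall_left hμ (S := S ∩ B) Set.inter_subset_right
  have hdisj : Disjoint (neighbors H (S ∩ A)) (neighbors H (S ∩ B)) :=
    h.2.1.symm.mono (h.neighbors_subset Set.inter_subset_right)
      (h.symm.neighbors_subset Set.inter_subset_right)
  have hsub : neighbors H (S ∩ A) ∪ neighbors H (S ∩ B) ⊆ neighbors H S :=
    Set.union_subset (neighbors_mono Set.inter_subset_left) (neighbors_mono Set.inter_subset_left)
  have hle := Set.ncard_le_ncard hsub
  rw [Set.ncard_union_eq hdisj] at hle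
  have hS : S.ncard = (S ∩ A).ncard + (S ∩ B).ncard := by
    rw [← Set.ncard_union_eq (h.2.1.mono Set.inter_subset_right Set.inter_subset_right),
      ← Set.inter_union_distrib_left, h.1, Set.inter_univ]
  omega

theorem robustly_matchable_has_perfect_two_matching {W : Type} [Fintype W]
    (H : SimpleGraph W) (μ ν : ℝ) (hμν : μ ≤ ν) (hν : ν < 1 / 1000)
    (hH : RobMat H μ ν) :
    ∃ ω : Sym2 W → ℕ, IsPerfectBMatching H (fun _ => 2) ω := by
  exact exists_perfectTwoMatching_of_hall H
    (hH.elim (fun h => h.hall hμν) fun h => h.hall (hμν.trans_lt hν))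

end Paper
end

section
/- Let t ∈ ℤ≥0 and γ > 0, and let H be a (μ, ν)-robustly 2-matchable graph on m vertices such that m/t ≤ γ ≤ μ ≤ ν/4 < 1/4000. Then H has a perfect b-matching for every function b : V(H) → ℤ≥0 such that (a) (1−γ)·t ≤ b(x) ≤ t for every vertex x, (b) the sum of b(x) over the vertices x of each connected component of H is even, and (c) if H is of type 2 with bipartition {X, Y}, then the sum of b over X equals the sum of b over Y. -/
/-!
STATEMENT 7: Let `t ∈ ℤ≥0` and `γ > 0`, and let `H` be a `(μ, ν)`-robustly 2-matchable
graph on `m` vertices such that `m/t ≤ γ ≤ μ ≤ ν/4 < 1/4000`. Then `H` has a perfect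
`b`-matching for every `b : V(H) → ℤ≥0` such that (a) `(1−γ)·t ≤ b(x) ≤ t` for every
vertex `x`, (b) the sum of `b` over each connected component of `H` is even, and (c) if
`H` is of type 2 with bipartition `{X, Y}`, then the sum of `b` over `X` equals the sum
of `b` over `Y`.
-/

namespace Paper

variable {V : Type*}

open Finset SimpleGraph

/-- The blow-up of `H` in which every vertex `v` is replaced by `b v` independent copies. -/
abbrev blowup (H : SimpleGraph V) (b : V → ℕ) : SimpleGraph (Σ v, Fin (b v)) :=
  H.comap Sigma.fst

lemma exists_isPerfectBMatching_of_involutive [Fintype V] (H : SimpleGraph V) (b : V → ℕ)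
    (p : (Σ v, Fin (b v)) → Σ v, Fin (b v)) (hp : Function.Involutive p)
    (hadj : ∀ x, H.Adj x.1 (p x).1) : ∃ ω : Sym2 V → ℕ, IsPerfectBMatching H b ω := by
  classical
  have hsymm : ∀ v w, #{x : Σ v, Fin (b v) | x.1 = v ∧ (p x).1 = w} =
      #{x : Σ v, Fin (b v) | x.1 = w ∧ (p x).1 = v} := fun v w =>
    Finset.card_bij' (fun x _ => p x) (fun x _ => p x)
      (by intro x hx; simp [hp x] at hx ⊢; tauto) (by intro x hx; simp [hp x] at hx ⊢; tauto)
      (fun x _ => hp x) (fun x _ => hp x)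
  refine ⟨Sym2.lift ⟨_, hsymm⟩, fun e he => ?_, fun v => ?_⟩
  · induction e using Sym2.ind with
    | _ v w =>
      simp only [Sym2.lift_mk, card_eq_zero, filter_eq_empty_iff]
      rintro x - ⟨rfl, rfl⟩
      exact he (hadj x)
  · have h := Finset.card_eq_sum_card_fiberwise (s := {x : Σ v, Fin (b v) | x.1 = v})
      (f := fun x => (p x).1) (t := univ) (by intro x _; simp)
    have hcard : #{x : Σ v, Fin (b v) | x.1 = v} = b v := by
      have : ({x : Σ v, Fin (b v) | x.1 = v} : Finset _) =
          ({v} : Finset V).sigma fun v => (univ : Finset (Fin (b v))) := by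
        ext x; simp
      rw [this, card_sigma]; simp
    rw [hcard] at h
    rw [h]
    simp only [Sym2.lift_mk, filter_filter]

lemma exists_isPerfectBMatching_of_isPerfectMatching [Fintype V] (H : SimpleGraph V) (b : V → ℕ)
    {M : (blowup H b).Subgraph} (hM : M.IsPerfectMatching) :
    ∃ ω : Sym2 V → ℕ, IsPerfectBMatching H b ω := by
  choose p hp _ using Subgraph.isPerfectMatching_iff.1 hM
  exact exists_isPerfectBMatching_of_involutive H b p
    (fun x => hM.1.eq_of_adj_left (hp (p x)) (hp x).symm) fun x => (hp x).adj_sub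

lemma exists_isPerfectBMatching_of_bipartite [Fintype V] [DecidableEq V] (H : SimpleGraph V)
    [DecidableRel H.Adj] (b : V → ℕ) (A : Finset V)
    (hA : ∀ u v, H.Adj u v → (u ∈ A ↔ v ∉ A))
    (hall : ∀ S : Finset V, ∑ v ∈ S, b v ≤ ∑ w with ∃ v ∈ S, H.Adj v w, b w) :
    ∃ ω : Sym2 V → ℕ, IsPerfectBMatching H b ω := by
  obtain ⟨f, hf, hadj⟩ := (Fintype.all_card_le_filter_rel_iff_exists_injective
    (fun x y : Σ v, Fin (b v) => H.Adj x.1 y.1)).1 fun T => by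
      have h1 : T ⊆ (T.image Sigma.fst).sigma fun v => (univ : Finset (Fin (b v))) := by
        intro x hx
        simp only [mem_sigma, mem_image, mem_univ, and_true]
        exact ⟨x, hx, rfl⟩
      have h2 : (({w | ∃ v ∈ T.image Sigma.fst, H.Adj v w} : Finset V).sigma
          fun v => (univ : Finset (Fin (b v)))) ⊆
          ({y | ∃ x ∈ T, H.Adj x.1 y.1} : Finset (Σ v, Fin (b v))) := by
        intro y hy
        simp only [mem_sigma, mem_filter, mem_image, mem_univ, and_true, true_and] at hy ⊢
        obtain ⟨v, ⟨x, hx, rfl⟩, hxy⟩ := hy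
        exact ⟨x, hx, hxy⟩
      have h3 := card_le_card h1
      have h4 := card_le_card h2
      have h5 := hall (T.image Sigma.fst)
      simp only [card_sigma, Finset.card_univ, Fintype.card_fin] at h3 h4
      exact h3.trans (h5.trans h4)
  let e := Equiv.ofBijective f (Finite.injective_iff_bijective.1 hf)
  have he : ∀ x, H.Adj x.1 (e x).1 := hadj
  have he' : ∀ x, H.Adj x.1 (e.symm x).1 := fun x => by
    simpa using (he (e.symm x)).symm
  refine exists_isPerfectBMatching_of_involutive H b
    (fun x => if x.1 ∈ A then e x else e.symm x) (fun x => ?_) fun x => ?_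
  · by_cases hx : x.1 ∈ A
    · have := (hA _ _ (he x)).1 hx
      simp [hx, this]
    · have : (e.symm x).1 ∈ A := by
        by_contra h
        exact hx ((hA _ _ (he' x)).2 h)
      simp [hx, this]
  · by_cases hx : x.1 ∈ A
    · simpa [hx] using he x
    · simpa [hx] using he' x

section Deletion

variable (H : SimpleGraph V) (b : V → ℕ) (U : Set (Σ v, Fin (b v)))

/-- The blow-up of `H` with the vertices of `U` deleted. -/
abbrev blowupDelete : SimpleGraph ((⊤ : (blowup H b).Subgraph).deleteVerts U).verts :=
  ((⊤ : (blowup H b).Subgraph).deleteVerts U).coe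

variable {H b U}

lemma blowupDelete_adj {x y : ((⊤ : (blowup H b).Subgraph).deleteVerts U).verts} :
    (blowupDelete H b U).Adj x y ↔ H.Adj x.1.1 y.1.1 := by
  have hx := x.2
  have hy := y.2
  simp only [Subgraph.deleteVerts_verts, Subgraph.verts_top, Set.mem_sdiff, Set.mem_univ,
    true_and] at hx hy
  simp [hx, hy]

lemma blowupDelete_reachable_of_common_neighbor
    {x y : ((⊤ : (blowup H b).Subgraph).deleteVerts U).verts} {z : Σ v, Fin (b v)} (hz : z ∉ U)
    (hx : H.Adj x.1.1 z.1) (hy : H.Adj y.1.1 z.1) : (blowupDelete H b U).Reachable x y :=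
  (blowupDelete_adj.2 hx : (blowupDelete H b U).Adj x ⟨z, by simpa using hz⟩).reachable.trans
    (blowupDelete_adj.2 hy.symm).reachable

lemma blowupDelete_reachable_iff (hU : ∀ v, ∃ i, (⟨v, i⟩ : Σ v, Fin (b v)) ∉ U)
    (hH : ∀ v, ∃ w, H.Adj v w) {x y : ((⊤ : (blowup H b).Subgraph).deleteVerts U).verts} :
    (blowupDelete H b U).Reachable x y ↔ H.Reachable x.1.1 y.1.1 := by
  constructor
  · rintro h
    exact h.map (⟨fun x => x.1.1, fun h => blowupDelete_adj.1 h⟩ : blowupDelete H b U →g H)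
  · rintro ⟨p⟩
    suffices ∀ u v (p : H.Walk u v) (x y : ((⊤ : (blowup H b).Subgraph).deleteVerts U).verts),
        x.1.1 = u → y.1.1 = v → (blowupDelete H b U).Reachable x y from this _ _ p x y rfl rfl
    intro u v p
    induction p with
    | nil =>
      rintro x y rfl hxy
      obtain ⟨w, hw⟩ := hH x.1.1
      obtain ⟨j, hj⟩ := hU w
      exact blowupDelete_reachable_of_common_neighbor hj hw (hxy ▸ hw)
    | @cons u w v h p ih =>
      rintro x y rfl rfl
      obtain ⟨j, hj⟩ := hU w
      exact (blowupDelete_adj.2 h : (blowupDelete H b U).Adj x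
        ⟨⟨w, j⟩, by simpa using hj⟩).reachable.trans (ih _ _ rfl rfl)

variable [Fintype V]

lemma ncard_oddComponents_le_card :
    (blowupDelete H b U).oddComponents.ncard ≤
      Nat.card (blowupDelete H b U).ConnectedComponent :=
  Set.ncard_le_card _

/-- Deleting `U` leaves at most one component for each vertex of `H`, besides those given by
copies of vertices in a set `I` containing the vertices with no surviving neighbour. -/
lemma ncard_oddComponents_le_of_isolated (I : Finset V)
    (hI : ∀ x : Σ v, Fin (b v), x ∉ U → x.1 ∉ I → ∃ z, z ∉ U ∧ H.Adj x.1 z.1) :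
    (blowupDelete H b U).oddComponents.ncard ≤ ∑ v ∈ I, b v + Fintype.card V := by
  classical
  refine ncard_oddComponents_le_card.trans ?_
  let f : (blowupDelete H b U).ConnectedComponent →
      ↥(I.sigma fun v => (univ : Finset (Fin (b v)))) ⊕ V := fun c =>
    if h : (Quot.out c).1.1 ∈ I then
      Sum.inl ⟨(Quot.out c).1, by simpa using h⟩ else Sum.inr (Quot.out c).1.1
  have hf : Function.Injective f := by
    intro c d hcd
    rw [← Quot.out_eq c, ← Quot.out_eq d]
    by_cases hc : (Quot.out c).1.1 ∈ I <;> by_cases hd : (Quot.out d).1.1 ∈ I <;>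
      simp only [f, hc, hd, dite_true, dite_false, Sum.inl.injEq, Sum.inr.injEq,
        Subtype.mk.injEq, reduceCtorEq] at hcd
    · rw [Subtype.ext hcd]
    · obtain ⟨z, hz, hadj⟩ := hI (Quot.out c).1 (by simpa using (Quot.out c).2) hc
      exact ConnectedComponent.sound
        (blowupDelete_reachable_of_common_neighbor hz hadj (hcd ▸ hadj))
  have := Nat.card_le_card_of_injective f hf
  rw [Nat.card_sum, Nat.card_eq_fintype_card (α := V), Nat.card_eq_fintype_card (α := ↥(I.sigma _)),
    Fintype.card_coe, card_sigma] at this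
  simpa only [Finset.card_univ, Fintype.card_fin] using this

lemma sum_le_ncard_of_covered (C : Finset V)
    (hC : ∀ x : Σ v, Fin (b v), x.1 ∈ C → x ∈ U) : ∑ v ∈ C, b v ≤ U.ncard := by
  have : ((C.sigma fun v => (univ : Finset (Fin (b v))) : Finset _) : Set _) ⊆ U := by
    intro x hx
    exact hC x (by simpa using hx)
  have := Set.ncard_le_ncard this
  rw [Set.ncard_coe_finset] at this
  simpa using this

/-- If any three vertices of `H` have two with a common neighbour, then deleting `U` without
deleting all copies of any vertex leaves at most two components. -/
lemma ncard_oddComponents_le_two (hU : ∀ v, ∃ i, (⟨v, i⟩ : Σ v, Fin (b v)) ∉ U)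
    (hH : ∀ u v w, ∃ z, H.Adj u z ∧ H.Adj v z ∨ H.Adj u z ∧ H.Adj w z ∨ H.Adj v z ∧ H.Adj w z) :
    (blowupDelete H b U).oddComponents.ncard ≤ 2 := by
  by_contra! h
  obtain ⟨c, -, d, -, e, -, hcd, hce, hde⟩ := (Set.two_lt_ncard (Set.toFinite _)).1 h
  induction c using ConnectedComponent.ind with | _ x
  induction d using ConnectedComponent.ind with | _ y
  induction e using ConnectedComponent.ind with | _ w
  obtain ⟨z, hz⟩ := hH x.1.1 y.1.1 w.1.1
  obtain ⟨i, hi⟩ := hU z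
  rcases hz with h | h | h
  · exact hcd (ConnectedComponent.sound (blowupDelete_reachable_of_common_neighbor hi h.1 h.2))
  · exact hce (ConnectedComponent.sound (blowupDelete_reachable_of_common_neighbor hi h.1 h.2))
  · exact hde (ConnectedComponent.sound (blowupDelete_reachable_of_common_neighbor hi h.1 h.2))

lemma oddComponents_blowupDelete_empty (hb : ∀ v, 0 < b v) (hH : ∀ v, ∃ w, H.Adj v w)
    (heven : ∀ v, Even (∑ᶠ x ∈ {y | H.Reachable v y}, b x)) :
    (blowupDelete H b ∅).oddComponents = ∅ := by
  classical
  refine Set.eq_empty_of_forall_notMem fun c hc => ?_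
  induction c using ConnectedComponent.ind with | _ x
  refine Nat.not_even_iff_odd.2 hc ?_
  have key : ((blowupDelete H b ∅).connectedComponentMk x).supp.ncard =
      ∑ᶠ w ∈ {y | H.Reachable x.1.1 y}, b w := by
    rw [← Set.ncard_image_of_injective _ Subtype.val_injective]
    have : Subtype.val '' ((blowupDelete H b ∅).connectedComponentMk x).supp =
        ((({w | H.Reachable x.1.1 w} : Finset V).sigma
          fun v => (univ : Finset (Fin (b v))) : Finset _) : Set (Σ v, Fin (b v))) := by
      ext y
      have hr : ∀ y, (blowupDelete H b ∅).Reachable y x ↔ H.Reachable y.1.1 x.1.1 := fun y =>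
        blowupDelete_reachable_iff (fun v => ⟨⟨0, hb v⟩, by simp⟩) hH
      simp [ConnectedComponent.mem_supp_iff, hr, reachable_comm]
    rw [this, Set.ncard_coe_finset, finsum_mem_eq_finite_toFinset_sum _ (Set.toFinite _)]
    simp only [card_sigma, Finset.card_univ, Fintype.card_fin]
    congr 1
    ext; simp
  rw [key]
  exact heven _

end Deletion

lemma sum_le_sum_of_card_le {b : V → ℕ} {γ : ℝ} {t : ℕ}
    (hb : ∀ x, (1 - γ) * (t : ℝ) ≤ (b x : ℝ) ∧ b x ≤ t) {S T : Finset V}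
    (h : (#S : ℝ) ≤ (1 - γ) * #T) : ∑ v ∈ S, b v ≤ ∑ v ∈ T, b v := by
  have h1 : ∑ v ∈ S, (b v : ℝ) ≤ #S * t := by
    simpa using Finset.sum_le_card_nsmul S (fun v => (b v : ℝ)) t
      fun x _ => by exact_mod_cast (hb x).2
  have h2 : #T * ((1 - γ) * t) ≤ ∑ v ∈ T, (b v : ℝ) := by
    simpa using Finset.card_nsmul_le_sum T (fun v => (b v : ℝ)) ((1 - γ) * t)
      fun x _ => (hb x).1
  have h3 := mul_le_mul_of_nonneg_right h (Nat.cast_nonneg (α := ℝ) t)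
  have : ∑ v ∈ S, (b v : ℝ) ≤ ∑ v ∈ T, (b v : ℝ) := by linarith
  exact_mod_cast this

/-- Hall's condition for subsets of one side of a robustly 2-matchable bipartite graph. -/
lemma hall_of_robMat2 [Fintype V] [DecidableEq V] (H : SimpleGraph V) [DecidableRel H.Adj]
    {μ γ : ℝ} {t : ℕ} {b : V → ℕ} (hγ : 0 < γ) (hγμ : γ ≤ μ) (hμ : μ < 1 / 4000)
    (hb : ∀ x, (1 - γ) * (t : ℝ) ≤ (b x : ℝ) ∧ b x ≤ t) {A B : Finset V}
    (hcard : (#A : ℝ) = Fintype.card V / 2)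
    (hAB : ∀ u v, H.Adj u v → v ∈ B → u ∈ A)
    (hdeg : ∀ v, (1 / 32 - μ) * Fintype.card V ≤ (#{w | H.Adj v w} : ℝ))
    (hsmall : (#{v | (#{w | H.Adj v w} : ℝ) < (1 / 3 - μ) * Fintype.card V} : ℝ) ≤
      (1 / 64 + μ) * Fintype.card V)
    (hsum : ∑ v ∈ A, b v = ∑ v ∈ B, b v) {S : Finset V} (hS : S ⊆ A) :
    ∑ v ∈ S, b v ≤ ∑ w with ∃ v ∈ S, H.Adj v w, b w := by
  set N : Finset V := {w | ∃ v ∈ S, H.Adj v w} with hN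
  set m : ℝ := (Fintype.card V : ℝ) with hm
  have hm0 : 0 ≤ m := Nat.cast_nonneg _
  have hμm : μ * m ≤ 1 / 4000 * m := mul_le_mul_of_nonneg_right hμ.le hm0
  have hγm : γ * m ≤ μ * m := mul_le_mul_of_nonneg_right hγμ hm0
  have hγ0 : 0 ≤ γ * m := by positivity
  have hγμm : 0 ≤ γ * (μ * m) := mul_nonneg hγ.le (by linarith)
  have hlow : (1 / 64 + μ) * m ≤ (1 - γ) * ((1 / 32 - μ) * m) := by nlinarith
  have hγ1 : 0 ≤ 1 - γ := by linarith
  have hnbr : ∀ v ∈ S, (#{w | H.Adj v w} : ℝ) ≤ #N := fun v hv => by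
    refine Nat.cast_le.2 (card_le_card fun w hw => ?_)
    simp only [hN, mem_filter, mem_univ, true_and] at hw ⊢
    exact ⟨v, hv, hw⟩
  rcases S.eq_empty_or_nonempty with rfl | ⟨v, hv⟩
  · simp
  by_cases hSs : ∀ v ∈ S, (#{w | H.Adj v w} : ℝ) < (1 / 3 - μ) * m
  · refine sum_le_sum_of_card_le hb ?_
    have h1 : (#S : ℝ) ≤ (1 / 64 + μ) * m :=
      le_trans (Nat.cast_le.2 (card_le_card fun w hw => by simpa using hSs w hw)) hsmall
    have h2 := mul_le_mul_of_nonneg_left ((hdeg v).trans (hnbr v hv)) hγ1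
    linarith
  push Not at hSs
  obtain ⟨u, hu, hud⟩ := hSs
  by_cases hSc : (#S : ℝ) ≤ (1 - γ) * ((1 / 3 - μ) * m)
  · refine sum_le_sum_of_card_le hb (hSc.trans ?_)
    exact mul_le_mul_of_nonneg_left (hud.trans (hnbr u hu)) hγ1
  push Not at hSc
  have hBN : ∑ w ∈ B, b w ≤ ∑ w ∈ N, b w + ∑ w ∈ B \ N, b w := by
    rw [← sum_union (disjoint_sdiff)]
    exact sum_le_sum_of_subset (by intro x hx; by_cases x ∈ N <;> simp [*])
  have hAS := sum_sdiff (f := b) hS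
  suffices ∑ w ∈ B \ N, b w ≤ ∑ w ∈ A \ S, b w by omega
  rcases (B \ N).eq_empty_or_nonempty with hT | ⟨w, hw⟩
  · simp [hT]
  have hdT : ∀ w ∈ B \ N, (#{z | H.Adj w z} : ℝ) ≤ #(A \ S) := fun w hw => by
    refine Nat.cast_le.2 (card_le_card fun z hz => ?_)
    simp only [hN, mem_filter, mem_univ, true_and, mem_sdiff, not_exists, not_and] at hw hz ⊢
    exact ⟨hAB z w hz.symm hw.1, fun h => hw.2 z h hz.symm⟩
  have hASc : (#(A \ S) : ℝ) = m / 2 - #S := by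
    rw [card_sdiff_of_subset hS, Nat.cast_sub (card_le_card hS), hcard]
  refine sum_le_sum_of_card_le hb ?_
  have h1 : (#(B \ N) : ℝ) ≤ (1 / 64 + μ) * m := by
    refine le_trans (Nat.cast_le.2 (card_le_card fun w hw => ?_)) hsmall
    have := hdT w hw
    simp only [mem_filter, mem_univ, true_and]
    nlinarith
  have h2 := mul_le_mul_of_nonneg_left ((hdeg w).trans (hdT w hw)) hγ1
  linarith

lemma ncard_eq_card_filter [Fintype V] (p : V → Prop) [DecidablePred p] :
    {v | p v}.ncard = #{v | p v} := by
  rw [← Set.ncard_coe_finset, coe_filter_univ]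

lemma RobMat2With.exists_isPerfectBMatching [Fintype V] {H : SimpleGraph V} {μ γ : ℝ} {t : ℕ}
    {b : V → ℕ} (hγ : 0 < γ) (hγμ : γ ≤ μ) (hμ : μ < 1 / 4000)
    (hb : ∀ x, (1 - γ) * (t : ℝ) ≤ (b x : ℝ) ∧ b x ≤ t) {A B : Set V}
    (hH : RobMat2With H μ A B) (hsum : ∑ᶠ x ∈ A, b x = ∑ᶠ y ∈ B, b y) :
    ∃ ω : Sym2 V → ℕ, IsPerfectBMatching H b ω := by
  classical
  obtain ⟨hun, hdis, hcard, hadj, hdeg, hsmall⟩ := hH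
  lift A to Finset V using Set.toFinite A
  lift B to Finset V using Set.toFinite B
  have hdis' : Disjoint A B := by exact_mod_cast hdis
  have hun' : A ∪ B = univ := by
    rw [← Finset.coe_inj, coe_union, hun, coe_univ]
  simp only [Set.ncard_coe_finset] at hcard
  rw [finsum_mem_coe_finset, finsum_mem_coe_finset] at hsum
  simp only [mem_coe] at hadj
  have hnA : ∀ v, v ∈ B ↔ v ∉ A := fun v =>
    ⟨fun h h' => Finset.disjoint_left.1 hdis' h' h, fun h => by
      have := mem_univ v
      rw [← hun', mem_union] at this
      exact this.resolve_left h⟩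
  have hc : (#A : ℝ) + #B = Fintype.card V := by
    rw [← Finset.card_univ, ← hun', card_union_of_disjoint hdis', Nat.cast_add]
  have hcR : (#A : ℝ) = #B := by exact_mod_cast hcard
  have hnb : ∀ v, (H.neighborSet v).ncard = #{w | H.Adj v w} := fun v =>
    ncard_eq_card_filter (H.Adj v)
  simp only [hnb, Nat.card_eq_fintype_card, ncard_eq_card_filter] at hdeg hsmall
  refine exists_isPerfectBMatching_of_bipartite H b A (fun u v huv => ?_) fun S => ?_
  · have := hadj u v huv
    have h1 := hnA u
    have h2 := hnA v
    tauto
  · have h1 := hall_of_robMat2 H hγ hγμ hμ hb (A := A) (B := B) (by linarith)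
      (fun u v huv hv => by have := hadj u v huv; have := hnA v; tauto) hdeg hsmall hsum
      (inter_subset_right : S ∩ A ⊆ A)
    have h2 := hall_of_robMat2 H hγ hγμ hμ hb (A := B) (B := A) (by linarith)
      (fun u v huv hv => by have := hadj u v huv; have := hnA v; tauto) hdeg hsmall hsum.symm
      (fun v hv => (hnA v).2 (mem_sdiff.1 hv).2 : S \ A ⊆ B)
    rw [← sum_inter_add_sum_sdiff S A b]
    refine (add_le_add h1 h2).trans ?_
    rw [← sum_union]
    · refine sum_le_sum_of_subset fun w hw => ?_
      simp only [mem_union, mem_filter, mem_univ, true_and, mem_inter, mem_sdiff] at hw ⊢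
      rcases hw with ⟨v, hv, h⟩ | ⟨v, hv, h⟩ <;> exact ⟨v, hv.1, h⟩
    · refine Finset.disjoint_left.2 fun w hw hw' => ?_
      simp only [mem_filter, mem_univ, true_and, mem_inter, mem_sdiff] at hw hw'
      obtain ⟨v, hv, h⟩ := hw
      obtain ⟨v', hv', h'⟩ := hw'
      have e1 := hadj _ _ h
      have e2 := hadj _ _ h'
      have := hnA v
      have := hnA v'
      have := hnA w
      tauto

/-- Among three neighbourhoods of size more than a third of the vertices, two intersect. -/
lemma exists_common_neighbor_of_degree [Fintype V] [DecidableEq V] (H : SimpleGraph V)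
    [DecidableRel H.Adj] (hdeg : ∀ v, Fintype.card V < 3 * #{w | H.Adj v w}) (u v w : V) :
    ∃ z, H.Adj u z ∧ H.Adj v z ∨ H.Adj u z ∧ H.Adj w z ∨ H.Adj v z ∧ H.Adj w z := by
  by_contra! h
  have d1 : Disjoint ({z | H.Adj u z} : Finset V) ({z | H.Adj v z} : Finset V) :=
    Finset.disjoint_left.2 fun z h1 h2 => by simp at h1 h2; exact (h z).1 h1 h2
  have d2 : Disjoint (({z | H.Adj u z} : Finset V) ∪ ({z | H.Adj v z} : Finset V))
      ({z | H.Adj w z} : Finset V) :=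
    Finset.disjoint_left.2 fun z h1 h2 => by
      simp at h1 h2
      exact h1.elim (fun h1 => (h z).2.1 h1 h2) fun h1 => (h z).2.2 h1 h2
  have hc := card_le_univ ((({z | H.Adj u z} : Finset V) ∪ ({z | H.Adj v z} : Finset V)) ∪
    ({z | H.Adj w z} : Finset V))
  rw [card_union_of_disjoint d2, card_union_of_disjoint d1] at hc
  have := hdeg u
  have := hdeg v
  have := hdeg w
  omega

lemma RobMat1.exists_isPerfectBMatching [Fintype V] {H : SimpleGraph V} {μ ν γ : ℝ} {t : ℕ}
    {b : V → ℕ} (hγ : 0 < γ) (ht : 0 < t) (hmt : (Fintype.card V : ℝ) ≤ γ * t) (hγμ : γ ≤ μ)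
    (hμν : μ ≤ ν / 4) (hμ : μ < 1 / 4000)
    (hb : ∀ x, (1 - γ) * (t : ℝ) ≤ (b x : ℝ) ∧ b x ≤ t) (hH : RobMat1 H μ ν)
    (heven : ∀ v, Even (∑ᶠ x ∈ {y | H.Reachable v y}, b x)) :
    ∃ ω : Sym2 V → ℕ, IsPerfectBMatching H b ω := by
  classical
  obtain ⟨hdeg, hedge⟩ := hH
  have hnb : ∀ v, (H.neighborSet v).ncard = #{w | H.Adj v w} := fun v =>
    ncard_eq_card_filter (H.Adj v)
  simp only [hnb, Nat.card_eq_fintype_card] at hdeg hedge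
  have ht0 : (0 : ℝ) < t := by exact_mod_cast ht
  have hmpos : ∀ _ : V, (1 : ℝ) ≤ Fintype.card V := fun v => by
    exact_mod_cast Fintype.card_pos_iff.2 ⟨v⟩
  have hthird : ∀ v, Fintype.card V < 3 * #{w | H.Adj v w} := fun v => by
    have h1 := hdeg v
    have h2 := hmpos v
    have : (Fintype.card V : ℝ) < 3 * #{w | H.Adj v w} := by nlinarith
    exact_mod_cast this
  have hex : ∀ v, ∃ w, H.Adj v w := fun v => by
    have : 0 < #{w | H.Adj v w} := by have := hthird v; omega
    obtain ⟨w, hw⟩ := card_pos.1 this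
    exact ⟨w, by simpa using hw⟩
  have hbpos : ∀ v, 0 < b v := fun v => by
    have := (hb v).1
    have : (0 : ℝ) < b v := by nlinarith
    exact_mod_cast this
  have hempty := oddComponents_blowupDelete_empty hbpos hex heven
  have hcardEven : Even (Nat.card (Σ v, Fin (b v))) := by
    have := odd_ncard_oddComponents (blowupDelete H b ∅)
    rw [hempty] at this
    simpa using this
  by_contra hno
  obtain ⟨U, hU⟩ := exists_isTutteViolator (G := blowup H b)
    (fun M hM => hno (exists_isPerfectBMatching_of_isPerfectMatching H b hM)) hcardEven
  change U.ncard < (blowupDelete H b U).oddComponents.ncard at hU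
  by_cases hR : ∀ v, ∃ i, (⟨v, i⟩ : Σ v, Fin (b v)) ∉ U
  · have h2 := ncard_oddComponents_le_two hR (exists_common_neighbor_of_degree H hthird)
    have hU1 : U.ncard ≤ 1 := by omega
    rcases Nat.le_one_iff_eq_zero_or_eq_one.1 hU1 with h0 | h1
    · rw [Set.ncard_eq_zero] at h0
      subst h0
      rw [hempty] at hU
      simp at hU
    · have hodd := odd_ncard_oddComponents (blowupDelete H b U)
      have hc : Nat.card ((⊤ : (blowup H b).Subgraph).deleteVerts U).verts + U.ncard =
          Nat.card (Σ v, Fin (b v)) := by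
        rw [Nat.card_coe_set_eq, Subgraph.deleteVerts_verts, Subgraph.verts_top,
          ← Set.compl_eq_univ_sdiff, add_comm, Set.ncard_add_ncard_compl]
      have h3 : (blowupDelete H b U).oddComponents.ncard = 2 := by omega
      rw [h3] at hodd
      grind
  · push Not at hR
    obtain ⟨v₀, hv₀⟩ := hR
    set C : Finset V := {v | ∀ i, (⟨v, i⟩ : Σ v, Fin (b v)) ∈ U} with hC
    set I : Finset V := {v | v ∉ C ∧ ∀ w, H.Adj v w → w ∈ C} with hI
    have hodd := ncard_oddComponents_le_of_isolated (H := H) (U := U) I fun x hx hxI => by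
      have hxC : x.1 ∉ C := fun h => hx ((mem_filter.1 h).2 x.2)
      simp only [hI, mem_filter, mem_univ, true_and, hxC, not_false_eq_true, not_forall] at hxI
      obtain ⟨w, hw, hwC⟩ := hxI
      simp only [hC, mem_filter, mem_univ, true_and, not_forall] at hwC
      obtain ⟨j, hj⟩ := hwC
      exact ⟨⟨w, j⟩, hj, hw⟩
    have hUC := sum_le_ncard_of_covered (U := U) C fun x hx => (mem_filter.1 hx).2 x.2
    have hlt : ∑ v ∈ C, (b v : ℝ) < ∑ v ∈ I, (b v : ℝ) + Fintype.card V := by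
      exact_mod_cast hUC.trans_lt (hU.trans_le hodd)
    have hIt : ∑ v ∈ I, (b v : ℝ) ≤ #I * t := by
      simpa using Finset.sum_le_card_nsmul I (fun v => (b v : ℝ)) t
        fun x _ => by exact_mod_cast (hb x).2
    have hCt : #C * ((1 - γ) * t) ≤ ∑ v ∈ C, (b v : ℝ) := by
      simpa using Finset.card_nsmul_le_sum C (fun v => (b v : ℝ)) ((1 - γ) * t)
        fun x _ => (hb x).1
    set m : ℝ := (Fintype.card V : ℝ) with hm
    have hm1 : 1 ≤ m := hmpos v₀
    rcases I.eq_empty_or_nonempty with hI0 | ⟨v, hv⟩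
    · have hC1 : (1 : ℝ) ≤ #C := by
        exact_mod_cast card_pos.2 ⟨v₀, by simpa [hC] using hv₀⟩
      rw [hI0, sum_empty] at hlt
      have : (1 - γ) * t ≤ #C * ((1 - γ) * t) :=
        le_mul_of_one_le_left (mul_nonneg (by linarith) ht0.le) hC1
      nlinarith
    · have hCd : (1 / 2 - μ) * m ≤ #C := by
        refine (hdeg v).trans (Nat.cast_le.2 (card_le_card fun w hw => ?_))
        exact (mem_filter.1 hv).2.2 w (mem_filter.1 hw).2
      have hIc : (#I : ℝ) < (1 / 2 - ν) * m := by
        by_contra! h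
        have h1 := hedge I (by rwa [Set.ncard_coe_finset])
        have h2 : edgesIn H (I : Set V) = 0 := by
          unfold edgesIn
          rw [Set.ncard_eq_zero]
          refine Set.eq_empty_of_forall_notMem fun e he => ?_
          induction e using Sym2.ind with
          | _ x y =>
            have hx := mem_filter.1 (mem_coe.1 (he.2 x (by simp)))
            have hy := mem_filter.1 (mem_coe.1 (he.2 y (by simp)))
            exact hy.2.1 (hx.2.2 y he.1)
        rw [h2, Nat.cast_zero] at h1
        have : 0 < ν * m ^ 2 := mul_pos (by linarith) (by positivity)
        linarith
      have e1 : (1 / 2 - μ) * m * ((1 - γ) * t) ≤ #C * ((1 - γ) * t) :=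
        mul_le_mul_of_nonneg_right hCd (mul_nonneg (by linarith) ht0.le)
      have e2 : #I * (t : ℝ) ≤ (1 / 2 - ν) * m * t :=
        mul_le_mul_of_nonneg_right hIc.le ht0.le
      have hmt' : 0 < m * t := by positivity
      have e3 : m ≤ γ * (m * t) := by nlinarith
      have e4 : 4 * (μ * (m * t)) ≤ ν * (m * t) := by nlinarith
      have e5 : γ * (m * t) ≤ μ * (m * t) := by nlinarith
      have e6 : 0 ≤ γ * (μ * (m * t)) := mul_nonneg hγ.le (mul_nonneg (by linarith) hmt'.le)
      nlinarith

theorem robustly_matchable_has_perfect_b_matching {W : Type} [Fintype W]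
    (H : SimpleGraph W) (μ ν γ : ℝ) (t : ℕ) (hγ : 0 < γ)
    (hmt : (Nat.card W : ℝ) / (t : ℝ) ≤ γ) (hγμ : γ ≤ μ) (hμν : μ ≤ ν / 4)
    (hν : ν / 4 < 1 / 4000)
    (hH : RobMat H μ ν)
    (b : W → ℕ)
    (hb1 : ∀ x : W, (1 - γ) * (t : ℝ) ≤ (b x : ℝ) ∧ b x ≤ t)
    (hb2 : ∀ v : W, Even (∑ᶠ x ∈ {y : W | H.Reachable v y}, b x))
    (hb3 : ∀ X Y : Set W, RobMat2With H μ X Y →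
      (∑ᶠ x ∈ X, b x) = ∑ᶠ y ∈ Y, b y) :
    ∃ ω : Sym2 W → ℕ, IsPerfectBMatching H b ω := by
  rcases t.eq_zero_or_pos with rfl | ht
  · refine ⟨fun _ => 0, fun _ _ => rfl, fun v => ?_⟩
    have := (hb1 v).2
    simp
    omega
  rcases hH with hH | ⟨A, B, hH⟩
  · refine hH.exists_isPerfectBMatching hγ ht ?_ hγμ hμν (by linarith) hb1 hb2
    rwa [Nat.card_eq_fintype_card, div_le_iff₀ (by exact_mod_cast ht)] at hmt
  · exact hH.exists_isPerfectBMatching hγ hγμ (by linarith) hb1 (hb3 A B hH)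

end Paper
end

section
/- Let H be an r-edge-coloured bipartite graph with bipartition {A, B}. Suppose that |A| ≥ 100³·r³·|B| and that every vertex in B has at least |A|/100 neighbours in A. Then there are 100r² monochromatic pairwise vertex-disjoint proper cycles and edges in H that together cover all vertices of B. -/
/-!
STATEMENT 8: Let `H` be an `r`-edge-coloured bipartite graph with bipartition `{A, B}`.
Suppose that `|A| ≥ 100³·r³·|B|` and that every vertex in `B` has at least `|A|/100`
neighbours in `A`. Then there are `100r²` monochromatic pairwise vertex-disjoint proper
cycles and edges in `H` that together cover all vertices of `B`.
-/

namespace Paper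

variable {V : Type*}

/-- The number of neighbours of `v` inside the set `W`. -/
noncomputable def degIn (G : SimpleGraph V) (v : V) (W : Set V) : ℕ :=
  (G.neighborSet v ∩ W).ncard

/-- `S` is (the vertex set of) a monochromatic proper cycle or a single edge of `G`. -/
def IsMonoProperCycleOrEdge {r : ℕ} (G : SimpleGraph V) (c : Sym2 V → Fin r)
    (S : Set V) : Prop :=
  (∃ u v, G.Adj u v ∧ S = {u, v}) ∨ IsMonoProperCycle G c S

section CycleCover

open Classical in
/-- In a chain whose last entry is related to its first one, every entry is related to its cyclic
successor. -/
theorem rel_formPerm_of_isChain {R : V → V → Prop} {l : List V} (hnd : l.Nodup)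
    (hl : l ≠ []) (hchain : l.IsChain R) (hclose : R (l.getLast hl) (l.head hl)) :
    ∀ x ∈ l, R x (l.formPerm x) := by
  intro x hx
  obtain ⟨k, hk, rfl⟩ := List.mem_iff_getElem.1 hx
  rw [List.formPerm_apply_getElem l hnd k hk]
  by_cases h : k + 1 < l.length
  · simp only [Nat.mod_eq_of_lt h]
    exact List.isChain_iff_getElem.1 hchain k h
  · obtain rfl : k = l.length - 1 := by omega
    have h0 : (l.length - 1 + 1) % l.length = 0 := by
      rw [Nat.sub_add_cancel (by omega), Nat.mod_self]
    simpa only [h0, List.getLast_eq_getElem, List.head_eq_getElem] using hclose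

open Classical in
/-- Removing from `S` a suitable cyclic chain destroys a vertex together with all its
neighbours. -/
theorem exists_cyclic_chain_closed_neighbors (R : V → V → Prop) (hsymm : ∀ x y, R x y → R y x)
    (S : Finset V) (hrefl : ∀ x ∈ S, R x x) (hS : S.Nonempty) :
    ∃ l : List V, ∃ v ∈ l, l.Nodup ∧ (∀ x ∈ l, x ∈ S) ∧ (∀ x ∈ l, R x (l.formPerm x)) ∧
      ∀ x ∈ S, R v x → x ∈ l := by
  let P : ℕ → Prop := fun n => ∃ l : List V, l.length = n ∧ l.Nodup ∧ (∀ x ∈ l, x ∈ S) ∧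
    l.IsChain R
  have hbound : ∀ n, P n → n ≤ S.card := by
    rintro n ⟨l, rfl, hnd, hmem, -⟩
    rw [← List.toFinset_card_of_nodup hnd]
    exact Finset.card_le_card fun x hx => hmem x (List.mem_toFinset.1 hx)
  obtain ⟨s, hs⟩ := hS
  have hone : P 1 := ⟨[s], rfl, by simp, by simpa using hs, by simp⟩
  have hmax : P (Nat.findGreatest P S.card) := Nat.findGreatest_spec (hbound 1 hone) hone
  have hge : ∀ n, P n → n ≤ Nat.findGreatest P S.card :=
    fun n hn => Nat.le_findGreatest (hbound n hn) hn
  obtain ⟨l, hlen, hnd, hmem, hchain⟩ := hmax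
  obtain _ | ⟨v, t⟩ := l
  · have := hge 1 hone
    simp at hlen
    omega
  have hnbr : ∀ x ∈ S, R v x → x ∈ v :: t := by
    intro x hx hvx
    by_contra hxl
    have := hge _ ⟨x :: v :: t, rfl, List.nodup_cons.2 ⟨hxl, hnd⟩,
      List.forall_mem_cons.2 ⟨hx, hmem⟩, List.isChain_cons_cons.2 ⟨hsymm _ _ hvx, hchain⟩⟩
    simp at this hlen
    omega
  set f : V → Bool := fun x => decide (¬ R v x) with hf
  have hvv : R v v := hrefl v (hmem v (by simp))
  have hne : (v :: t).rdropWhile f ≠ [] := by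
    rw [Ne, List.rdropWhile_eq_nil_iff]
    intro h
    simpa [hf, hvv] using h v (by simp)
  have hpre : (v :: t).rdropWhile f <+: v :: t := List.rdropWhile_prefix f _
  have hhead : ((v :: t).rdropWhile f).head hne = v := by
    rw [hpre.head hne]; simp
  have hlast : R v (((v :: t).rdropWhile f).getLast hne) := by
    simpa [hf] using List.rdropWhile_last_not f (v :: t) hne
  refine ⟨(v :: t).rdropWhile f, v, ?_, hnd.sublist hpre.sublist,
    fun x hx => hmem x (hpre.subset hx), ?_, ?_⟩
  · have := List.head_mem hne
    rwa [hhead] at this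
  · refine rel_formPerm_of_isChain (hnd.sublist hpre.sublist) hne (hchain.prefix hpre) ?_
    rw [hhead]
    exact hsymm _ _ hlast
  · intro x hx hvx
    have hxl := hnbr x hx hvx
    rw [← List.rdropWhile_append_rtakeWhile (p := f) (l := v :: t), List.mem_append] at hxl
    refine hxl.resolve_right fun h => ?_
    simpa [hf, hvx] using List.mem_rtakeWhile_imp h

open Classical in
/-- Pósa's theorem: a finite vertex set without independent subsets of size larger than `n` can be
partitioned into `n` (possibly degenerate) cycles. Here `R` is adjacency or equality. -/
theorem exists_cyclic_chain_partition (R : V → V → Prop) (hsymm : ∀ x y, R x y → R y x)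
    (n : ℕ) (S : Finset V) (hrefl : ∀ x ∈ S, R x x)
    (hind : ∀ T ⊆ S, (∀ x ∈ T, ∀ y ∈ T, x ≠ y → ¬ R x y) → T.card ≤ n) :
    ∃ f : Fin n → List V, (∀ j, (f j).Nodup) ∧ (∀ j, ∀ x ∈ f j, R x ((f j).formPerm x)) ∧
      (∀ j k, ∀ x ∈ f j, x ∈ f k → j = k) ∧ ∀ x, x ∈ S ↔ ∃ j, x ∈ f j := by
  induction n generalizing S with
  | zero =>
    have hS : S = ∅ := by
      refine Finset.eq_empty_of_forall_notMem fun x hx => ?_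
      have := hind {x} (by simpa using hx) (by simp +contextual)
      simp at this
    subst hS
    exact ⟨fun _ => [], by simp, by simp, by simp, by simp⟩
  | succ n ih =>
    obtain rfl | hS := S.eq_empty_or_nonempty
    · exact ⟨fun _ => [], by simp, by simp, by simp, by simp⟩
    obtain ⟨l, v, hv, hnd, hlS, hlR, hnbr⟩ :=
      exists_cyclic_chain_closed_neighbors R hsymm S hrefl hS
    obtain ⟨f, hfnd, hfR, hfd, hfS⟩ := ih (S.filter (· ∉ l))
      (fun x hx => hrefl x (Finset.mem_filter.1 hx).1) (by
        intro T hT hTind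
        have hTS : ∀ x ∈ T, x ∈ S ∧ x ∉ l := fun x hx => Finset.mem_filter.1 (hT hx)
        have hvT : v ∉ T := fun h => (hTS v h).2 hv
        have hvR : ∀ x ∈ T, ¬ R v x := fun x hx h => (hTS x hx).2 (hnbr x (hTS x hx).1 h)
        have := hind (insert v T)
          (Finset.insert_subset (hlS v hv) fun x hx => (hTS x hx).1) (by
            simp only [Finset.mem_insert]
            rintro x (rfl | hx) y (rfl | hy) hxy
            · exact absurd rfl hxy
            · exact hvR y hy
            · exact fun h => hvR x hx (hsymm _ _ h)
            · exact hTind x hx y hy hxy)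
        rw [Finset.card_insert_of_notMem hvT] at this
        omega)
    have hfl : ∀ j, ∀ x ∈ f j, x ∉ l := fun j x hx =>
      (Finset.mem_filter.1 ((hfS x).2 ⟨j, hx⟩)).2
    refine ⟨Fin.cons l f, ?_, ?_, ?_, ?_⟩
    · simpa [Fin.forall_fin_succ] using ⟨hnd, hfnd⟩
    · simpa [Fin.forall_fin_succ] using ⟨hlR, hfR⟩
    · intro j k x
      refine Fin.cases ?_ (fun j => ?_) j <;> refine Fin.cases ?_ (fun k => ?_) k
      · simp
      · exact fun h h' => absurd h (hfl k x h')
      · exact fun h h' => absurd h' (hfl j x h)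
      · simpa using hfd j k x
    · intro x
      simp only [Fin.exists_fin_succ, Fin.cons_zero, Fin.cons_succ, ← hfS, Finset.mem_filter]
      have := hlS x
      tauto

end CycleCover

section MonochromaticCycle

variable {r : ℕ} (G : SimpleGraph V) (c : Sym2 V → Fin r)

/-- A chain `a₁, …, aₘ` whose consecutive entries are joined through `g a₁, …, g aₘ` in colour `i`
gives a monochromatic path from `a₁` to `g aₘ`. -/
theorem exists_mono_path (i : Fin r) (g : V → V) (z : V) (l : List V) (a : V)
    (hz : (a :: l).getLast (List.cons_ne_nil a l) = z) (hnd : (a :: l).Nodup)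
    (hinj : ∀ x ∈ a :: l, ∀ y ∈ a :: l, g x = g y → x = y)
    (hdisj : ∀ x ∈ a :: l, ∀ y ∈ a :: l, g x ≠ y)
    (hadj : ∀ x ∈ a :: l, G.Adj x (g x) ∧ c s(x, g x) = i)
    (hchain : (a :: l).IsChain fun x y => G.Adj (g x) y ∧ c s(g x, y) = i) :
    ∃ p : G.Walk a (g z), p.IsPath ∧ (l ≠ [] → s(g z, a) ∉ p.edges) ∧ (∀ e ∈ p.edges, c e = i) ∧
      ∀ x, x ∈ p.support ↔ x ∈ a :: l ∨ ∃ y ∈ a :: l, x = g y := by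
  induction l generalizing a with
  | nil =>
    obtain rfl : a = z := by simpa using hz
    obtain ⟨h, hc⟩ := hadj a (by simp)
    refine ⟨.cons h .nil, ?_, by simp, ?_, ?_⟩
    · simpa using h.ne
    · simpa using hc
    · simp
  | cons b t ih =>
    obtain ⟨⟨hgb, hgc⟩, hchain'⟩ := List.isChain_cons_cons.1 hchain
    obtain ⟨hab, hnd'⟩ := List.nodup_cons.1 hnd
    obtain ⟨h, hc⟩ := hadj a (by simp)
    obtain ⟨p, hp, -, hpc, hps⟩ := ih b (by simpa using hz) hnd'
      (fun x hx y hy => hinj x (List.mem_cons_of_mem a hx) y (List.mem_cons_of_mem a hy))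
      (fun x hx y hy => hdisj x (List.mem_cons_of_mem a hx) y (List.mem_cons_of_mem a hy))
      (fun x hx => hadj x (List.mem_cons_of_mem a hx)) hchain'
    have ha : a ∉ p.support := by
      rw [hps]
      rintro (ha | ⟨y, hy, ha⟩)
      · exact hab ha
      · exact hdisj y (List.mem_cons_of_mem a hy) a (by simp) ha.symm
    have hga : g a ∉ p.support := by
      rw [hps]
      rintro (hg | ⟨y, hy, hg⟩)
      · exact hdisj a (by simp) _ (List.mem_cons_of_mem a hg) rfl
      · exact hab (hinj a (by simp) y (List.mem_cons_of_mem a hy) hg ▸ hy)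
    refine ⟨.cons h (.cons hgb p), ?_, ?_, ?_, ?_⟩
    · simp only [SimpleGraph.Walk.cons_isPath_iff, SimpleGraph.Walk.support_cons, List.mem_cons,
        not_or]
      exact ⟨⟨hp, hga⟩, h.ne, ha⟩
    · intro _ he
      have hzp : g z ≠ g a := fun h => hga (h ▸ p.end_mem_support)
      have hb : a ≠ b := fun h => ha (h ▸ p.start_mem_support)
      simp only [SimpleGraph.Walk.edges_cons, List.mem_cons] at he
      rcases he with he | he | he
      · simp [hzp, h.ne] at he
      · simp [hzp, hb] at he
        exact h.ne he.2
      · exact ha (p.snd_mem_support_of_mem_edges he)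
    · simpa [hc, hgc] using hpc
    · intro x
      simp only [SimpleGraph.Walk.support_cons, List.mem_cons, hps, exists_eq_or_imp]
      tauto

open Classical in
/-- A cyclic list whose consecutive entries are joined through `g` in colour `i` gives a
monochromatic cycle, or an edge if the list has one entry. -/
theorem isMonoProperCycleOrEdge_of_cyclic_list (i : Fin r) (g : V → V) (l : List V) (hl : l ≠ [])
    (hnd : l.Nodup) (hinj : ∀ x ∈ l, ∀ y ∈ l, g x = g y → x = y)
    (hdisj : ∀ x ∈ l, ∀ y ∈ l, g x ≠ y)
    (hadj : ∀ x ∈ l, G.Adj x (g x) ∧ c s(x, g x) = i)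
    (hsucc : ∀ x ∈ l, G.Adj (g x) (l.formPerm x) ∧ c s(g x, l.formPerm x) = i) :
    IsMonoProperCycleOrEdge G c {x | x ∈ l ∨ ∃ y ∈ l, x = g y} := by
  match l, hl with
  | [a], _ =>
    refine Or.inl ⟨a, g a, (hadj a (by simp)).1, ?_⟩
    ext x
    simp
  | a :: b :: t, _ =>
    right
    have hchain : (a :: b :: t).IsChain fun x y => G.Adj (g x) y ∧ c s(g x, y) = i := by
      refine List.isChain_iff_getElem.2 fun k hk => ?_
      have := hsucc _ (List.getElem_mem (Nat.lt_of_succ_lt hk))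
      rwa [List.formPerm_apply_lt_getElem _ hnd k hk] at this
    obtain ⟨z, hz⟩ : ∃ z, (a :: b :: t).getLast (List.cons_ne_nil _ _) = z := ⟨_, rfl⟩
    obtain ⟨p, hp, hpe, hpc, hps⟩ :=
      exists_mono_path G c i g z (b :: t) a hz hnd hinj hdisj hadj hchain
    have hzmem : z ∈ b :: t := by
      rw [← hz, List.getLast_cons (List.cons_ne_nil b t)]
      exact List.getLast_mem _
    obtain ⟨hclose, hclosec⟩ := hsucc z (List.mem_cons_of_mem a hzmem)
    have hformz : (a :: b :: t).formPerm z = a := by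
      rw [← hz, List.formPerm_apply_getLast]
    rw [hformz] at hclose hclosec
    refine ⟨i, g z, .cons hclose p, ?_, ?_, ?_⟩
    · exact (SimpleGraph.Walk.cons_isCycle_iff p hclose).2 ⟨hp, hpe (List.cons_ne_nil b t)⟩
    · simpa [hclosec] using hpc
    · ext x
      rw [Set.mem_ofPred_eq, Set.mem_ofPred_eq, SimpleGraph.Walk.support_cons, ← hps]
      refine ⟨List.mem_cons_of_mem _, fun h => ?_⟩
      rcases List.mem_cons.1 h with rfl | h
      · exact p.end_mem_support
      · exact h

end MonochromaticCycle

section Counting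

variable [DecidableEq V]

/-- If the sets `F x`, `x ∈ T`, pairwise meet in at most `N` points, then their union is large. -/
theorem sum_card_le_card_biUnion_add {ι : Type*} [DecidableEq ι] (F : ι → Finset V) (N : ℕ)
    (T : Finset ι) (hT : ∀ x ∈ T, ∀ y ∈ T, x ≠ y → (F x ∩ F y).card ≤ N) :
    ∑ x ∈ T, (F x).card ≤ (T.biUnion F).card + T.card.choose 2 * N := by
  induction T using Finset.induction_on with
  | empty => simp
  | insert x T hx ih =>
    have ih' := ih fun y hy z hz =>
      hT y (Finset.mem_insert_of_mem hy) z (Finset.mem_insert_of_mem hz)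
    have hinter : (F x ∩ T.biUnion F).card ≤ T.card * N := by
      rw [Finset.inter_biUnion]
      refine Finset.card_biUnion_le_card_mul _ _ _ fun y hy => ?_
      exact hT x (Finset.mem_insert_self x T) y (Finset.mem_insert_of_mem hy)
        fun h => hx (h ▸ hy)
    have hunion := Finset.card_union_add_card_inter (F x) (T.biUnion F)
    rw [Finset.sum_insert hx, Finset.biUnion_insert, Finset.card_insert_of_notMem hx,
      Nat.choose_succ_succ' T.card 1, Nat.choose_one_right, one_add_one_eq_two, add_mul]
    omega

/-- At most `m` subsets of `A` of density at least `1 / m` can have small pairwise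
intersections. -/
theorem card_le_of_card_inter_lt {ι : Type*} (F : ι → Finset V) (A : Finset V)
    (m N : ℕ) (hm : 2 ≤ m) (hN : m ^ 3 * N ≤ A.card) (hpos : 0 < N) (T : Finset ι)
    (hA : ∀ x ∈ T, F x ⊆ A) (hF : ∀ x ∈ T, A.card ≤ m * (F x).card)
    (hT : ∀ x ∈ T, ∀ y ∈ T, x ≠ y → (F x ∩ F y).card < N) : T.card ≤ m := by
  classical
  by_contra! hcard
  obtain ⟨U, hUT, hU⟩ := Finset.exists_subset_card_eq (Nat.succ_le_of_lt hcard)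
  have hsum := sum_card_le_card_biUnion_add F N U
    fun x hx y hy hxy => (hT x (hUT hx) y (hUT hy) hxy).le
  have hunion : (U.biUnion F).card ≤ A.card :=
    Finset.card_le_card (Finset.biUnion_subset.2 fun x hx => hA x (hUT hx))
  have hlower : (m + 1) * A.card ≤ m * ∑ x ∈ U, (F x).card := by
    rw [Finset.mul_sum, ← Nat.succ_eq_add_one, ← hU, ← smul_eq_mul]
    exact Finset.card_nsmul_le_sum _ _ _ fun x hx => hF x (hUT hx)
  have hchoose : (m + 1).choose 2 * 2 = (m + 1) * m := by
    rw [Nat.choose_two_right, ← Finset.sum_range_id, Finset.sum_range_id_mul_two, Nat.add_sub_cancel]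
  rw [hU, Nat.succ_eq_add_one] at hsum
  have h1 : A.card ≤ m * ((m + 1).choose 2 * N) := by nlinarith
  have h2 : 2 * A.card ≤ m ^ 2 * (m + 1) * N := by
    calc 2 * A.card ≤ 2 * (m * ((m + 1).choose 2 * N)) := by omega
      _ = m * ((m + 1).choose 2 * 2) * N := by ring
      _ = m ^ 2 * (m + 1) * N := by rw [hchoose]; ring
  have h3 : (m ^ 2 * N) * (2 * m) ≤ (m ^ 2 * N) * (m + 1) := by nlinarith
  have := Nat.le_of_mul_le_mul_left h3 (by positivity)
  omega

/-- Sets that are each at least as large as the index type have distinct representatives. -/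
theorem exists_injective_of_card_le {ι : Type*} [Fintype ι] (F : ι → Finset V)
    (hF : ∀ x, Fintype.card ι ≤ (F x).card) :
    ∃ g : ι → V, Function.Injective g ∧ ∀ x, g x ∈ F x := by
  refine (Finset.all_card_le_biUnion_card_iff_exists_injective F).1 fun s => ?_
  obtain rfl | ⟨x, hx⟩ := s.eq_empty_or_nonempty
  · simp
  · exact (s.card_le_univ.trans (hF x)).trans
      (Finset.card_le_card (Finset.subset_biUnion_of_mem F hx))

end Counting

open Classical in
/-- The neighbours of `b` in `A` along edges of colour `i`. -/
noncomputable def colorNbrs {r : ℕ} [Fintype V] (G : SimpleGraph V) (c : Sym2 V → Fin r)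
    (A : Set V) (i : Fin r) (b : V) : Finset V :=
  {a | a ∈ A ∧ G.Adj b a ∧ c s(b, a) = i}

theorem mem_colorNbrs {r : ℕ} [Fintype V] {G : SimpleGraph V} {c : Sym2 V → Fin r}
    {A : Set V} {i : Fin r} {b a : V} :
    a ∈ colorNbrs G c A i b ↔ a ∈ A ∧ G.Adj b a ∧ c s(b, a) = i := by
  simp [colorNbrs]

/-- Some colour is used on at least a `1 / r` fraction of the edges from `b` to `A`. -/
theorem exists_degIn_le_mul_card_colorNbrs {r : ℕ} [Fintype V] (G : SimpleGraph V)
    (c : Sym2 V → Fin r) (A : Set V) (b : V) :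
    ∃ i, degIn G b A ≤ r * (colorNbrs G c A i b).card := by
  classical
  have hsum : degIn G b A = ∑ i, (colorNbrs G c A i b).card := by
    rw [degIn, Set.ncard_eq_toFinset_card',
      Finset.card_eq_sum_card_fiberwise (f := fun a => c s(b, a)) (t := Finset.univ) (by simp)]
    refine Finset.sum_congr rfl fun i _ => congrArg Finset.card ?_
    ext a
    simp [mem_colorNbrs]
    tauto
  by_contra! h
  have hlt : ∑ i : Fin r, r * (colorNbrs G c A i b).card < ∑ _i : Fin r, degIn G b A :=
    Finset.sum_lt_sum_of_nonempty ⟨c s(b, b), Finset.mem_univ _⟩ fun i _ => h i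
  rw [← Finset.mul_sum, ← hsum] at hlt
  simp at hlt

theorem bipartite_cover_of_small_part {W : Type} [Fintype W] (r : ℕ)
    (H : SimpleGraph W) (c : Sym2 W → Fin r) (A B : Set W)
    (hpart : A ∪ B = Set.univ) (hdisj : Disjoint A B)
    (hbip : ∀ u v : W, H.Adj u v → (u ∈ A ∧ v ∈ B) ∨ (u ∈ B ∧ v ∈ A))
    (hsize : (100 ^ 3 * r ^ 3 : ℝ) * (B.ncard : ℝ) ≤ (A.ncard : ℝ))
    (hdeg : ∀ v ∈ B, (A.ncard : ℝ) / 100 ≤ (degIn H v A : ℝ)) :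
    ∃ f : Fin (100 * r ^ 2) → Set W,
      (∀ i j : Fin (100 * r ^ 2), i ≠ j → Disjoint (f i) (f j)) ∧
      (∀ i, f i = ∅ ∨ IsMonoProperCycleOrEdge H c (f i)) ∧
      B ⊆ ⋃ i, f i := by
  classical
  have hsize' : (100 * r) ^ 3 * B.ncard ≤ A.ncard := by
    rw [mul_pow]
    exact_mod_cast hsize
  have hcol : ∀ b, ∃ i, b ∈ B → A.ncard ≤ 100 * r * (colorNbrs H c A i b).card := by
    intro b
    obtain ⟨i, hi⟩ := exists_degIn_le_mul_card_colorNbrs H c A b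
    refine ⟨i, fun hb => ?_⟩
    have h : A.ncard ≤ degIn H b A * 100 := by
      exact_mod_cast (div_le_iff₀ (by norm_num : (0 : ℝ) < 100)).1 (hdeg b hb)
    nlinarith
  choose col hcol using hcol
  have hm : ∀ i : Fin r, 2 ≤ 100 * r := fun i => by have := i.pos; omega
  -- Colour class `i` is partitioned into cycles of the graph of pairs with many common neighbours.
  have hpartition : ∀ i : Fin r, ∃ f : Fin (100 * r) → List W, (∀ j, (f j).Nodup) ∧
      (∀ j, ∀ x ∈ f j, B.ncard ≤
        (colorNbrs H c A i x ∩ colorNbrs H c A i ((f j).formPerm x)).card) ∧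
      (∀ j k, ∀ x ∈ f j, x ∈ f k → j = k) ∧
      ∀ x, x ∈ B.toFinset.filter (col · = i) ↔ ∃ j, x ∈ f j := by
    intro i
    refine exists_cyclic_chain_partition
      (fun x y => B.ncard ≤ (colorNbrs H c A i x ∩ colorNbrs H c A i y).card)
      (fun x y h => by rwa [Finset.inter_comm]) _ _ ?_ ?_
    · intro x hx
      obtain ⟨hxB, rfl⟩ : x ∈ B ∧ col x = i := by simpa using hx
      rw [Finset.inter_self]
      have h1 := hcol x hxB
      have h2 : 0 < 100 * r := by have := hm (col x); omega
      have h3 : (100 * r) * ((100 * r) ^ 2 * B.ncard) ≤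
          100 * r * (colorNbrs H c A (col x) x).card := by
        calc _ = (100 * r) ^ 3 * B.ncard := by ring
          _ ≤ _ := hsize'.trans h1
      exact (Nat.le_mul_of_pos_left _ (by positivity)).trans (Nat.le_of_mul_le_mul_left h3 h2)
    · intro T hT hind
      have hTB : ∀ x ∈ T, x ∈ B ∧ col x = i := fun x hx => by simpa using hT hx
      obtain rfl | ⟨x, hx⟩ := T.eq_empty_or_nonempty
      · simp
      rw [Set.ncard_eq_toFinset_card' A] at hsize' hcol
      refine card_le_of_card_inter_lt (colorNbrs H c A i) A.toFinset (100 * r) B.ncard (hm i)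
        hsize' ((Set.ncard_pos B.toFinite).2 ⟨x, (hTB x hx).1⟩) T ?_ ?_ ?_
      · intro y _ a ha
        simpa using (mem_colorNbrs.1 ha).1
      · intro y hy
        obtain ⟨hyB, rfl⟩ := hTB y hy
        exact hcol y hyB
      · exact fun y hy z hz hyz => not_le.1 (hind y hy z hz hyz)
  choose f hnd hR huniq hcover using hpartition
  have hmem : ∀ i j x, x ∈ f i j → x ∈ B ∧ col x = i := fun i j x hx => by
    simpa using (hcover i x).2 ⟨j, hx⟩
  have hidx : ∀ x : B, ∃ j, x.1 ∈ f (col x) j := fun x => (hcover (col x) x).1 (by simp)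
  choose idx hidx using hidx
  obtain ⟨g, hginj, hg⟩ := exists_injective_of_card_le
    (fun x : B => colorNbrs H c A (col x) x ∩
      colorNbrs H c A (col x) ((f (col x) (idx x)).formPerm x))
    (fun x => by
      rw [← Nat.card_eq_fintype_card, Nat.card_coe_set_eq]
      exact hR _ _ _ (hidx x))
  obtain ⟨g', hg'⟩ : ∃ g' : W → W, ∀ x : B, g' x = g x :=
    ⟨fun x => if h : x ∈ B then g ⟨x, h⟩ else x, fun x => by simp⟩
  have hg'inj : ∀ x ∈ B, ∀ y ∈ B, g' x = g' y → x = y := by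
    intro x hx y hy h
    rw [hg' ⟨x, hx⟩, hg' ⟨y, hy⟩] at h
    exact congrArg Subtype.val (hginj h)
  have hg'A : ∀ x ∈ B, g' x ∈ A := fun x hx => by
    rw [hg' ⟨x, hx⟩]
    exact (mem_colorNbrs.1 (Finset.mem_inter.1 (hg ⟨x, hx⟩)).1).1
  have hg'B : ∀ x ∈ B, ∀ y ∈ B, g' x ≠ y := fun x hx y hy h =>
    Set.disjoint_left.1 hdisj (hg'A x hx) (h ▸ hy)
  have hg'nbr : ∀ i j, ∀ x ∈ f i j, g' x ∈ colorNbrs H c A i x ∧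
      g' x ∈ colorNbrs H c A i ((f i j).formPerm x) := by
    intro i j x hx
    obtain ⟨hxB, rfl⟩ := hmem i j x hx
    obtain rfl := huniq _ _ _ _ hx (hidx ⟨x, hxB⟩)
    rw [hg' ⟨x, hxB⟩]
    exact Finset.mem_inter.1 (hg ⟨x, hxB⟩)
  have e : Fin (100 * r ^ 2) ≃ Fin r × Fin (100 * r) :=
    Fintype.equivOfCardEq (by simp; ring)
  refine ⟨fun k => {x | x ∈ f (e k).1 (e k).2 ∨ ∃ y ∈ f (e k).1 (e k).2, x = g' y}, ?_, ?_, ?_⟩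
  · intro k k' hkk
    have hne : ∀ x, x ∈ f (e k).1 (e k).2 → x ∉ f (e k').1 (e k').2 := by
      intro x hx hx'
      have h1 : (e k).1 = (e k').1 := (hmem _ _ x hx).2.symm.trans (hmem _ _ x hx').2
      refine hkk (e.injective (Prod.ext h1 (huniq (e k').1 _ _ x ?_ hx')))
      rwa [← h1]
    refine Set.disjoint_left.2 ?_
    rintro x (hx | ⟨y, hy, rfl⟩) (hx' | ⟨y', hy', h⟩)
    · exact hne x hx hx'
    · exact hg'B y' (hmem _ _ _ hy').1 x (hmem _ _ _ hx).1 h.symm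
    · exact hg'B y (hmem _ _ _ hy).1 _ (hmem _ _ _ hx').1 rfl
    · exact hne y hy (hg'inj y (hmem _ _ _ hy).1 y' (hmem _ _ _ hy').1 h ▸ hy')
  · intro k
    by_cases hl : f (e k).1 (e k).2 = []
    · left
      simp [hl]
    · right
      refine isMonoProperCycleOrEdge_of_cyclic_list H c (e k).1 g' _ hl (hnd _ _)
        (fun x hx y hy => hg'inj x (hmem _ _ _ hx).1 y (hmem _ _ _ hy).1)
        (fun x hx y hy => hg'B x (hmem _ _ _ hx).1 y (hmem _ _ _ hy).1)
        (fun x hx => (mem_colorNbrs.1 (hg'nbr _ _ x hx).1).2) (fun x hx => ?_)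
      obtain ⟨-, hadj, hc⟩ := mem_colorNbrs.1 (hg'nbr _ _ x hx).2
      exact ⟨hadj.symm, by rwa [Sym2.eq_swap]⟩
  · intro x hx
    refine Set.mem_iUnion.2 ⟨e.symm (col x, idx ⟨x, hx⟩), Or.inl ?_⟩
    simpa using hidx ⟨x, hx⟩

end Paper
end

section
/- For every sufficiently large n, there is a graph on n vertices with minimum degree at least log n that contains no cycle of length shorter than log n/(4·log log n). -/
namespace Paper

open Filter

/-- Suppose the only edges of `G'` outside `G` join `v` to a clique `S` of `G` all of whose edges
are missing from `G'`, and `S` is far from `v` in `G`. Then a lower bound on the lengths of cycles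
of `G` is inherited by `G'`. -/
theorem le_length_of_isCycle_of_switch {V : Type*} {G G' : SimpleGraph V} {v : V} {g : ℕ}
    {S : Set V} (hG : ∀ (u : V) (w : G.Walk u u), w.IsCycle → g ≤ w.length)
    (hfar : ∀ s ∈ S, ∀ p : G.Walk v s, g ≤ p.length + 1)
    (hclique : ∀ s ∈ S, ∀ t ∈ S, s ≠ t → G.Adj s t ∧ ¬ G'.Adj s t)
    (hv : ∀ a, G'.Adj v a → G.Adj v a ∨ a ∈ S)
    (hG' : ∀ a b, a ≠ v → b ≠ v → G'.Adj a b → G.Adj a b)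
    (u : V) (w : G'.Walk u u) (hw : w.IsCycle) : g ≤ w.length := by
  classical
  have edges_of_avoid : ∀ {a b : V} (q : G'.Walk a b), v ∉ q.support →
      ∀ e ∈ q.edges, e ∈ G.edgeSet := by
    intro a b q hq e he
    induction e using Sym2.ind with
    | _ c d =>
      refine hG' c d ?_ ?_ (q.adj_of_mem_edges he)
      · rintro rfl; exact hq (q.fst_mem_support_of_mem_edges he)
      · rintro rfl; exact hq (q.snd_mem_support_of_mem_edges he)
  by_cases hvw : v ∈ w.support
  · have hlen : (w.rotate v hvw).length = w.length := by simp
    have hc : (w.rotate v hvw).IsCycle := SimpleGraph.Walk.IsCycle.rotate hvw hw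
    rw [← hlen]
    generalize w.rotate v hvw = c at hc
    cases c with
    | nil => exact absurd rfl hc.ne_nil
    | @cons _ a _ h p =>
      obtain ⟨hp, hnot⟩ := (SimpleGraph.Walk.cons_isCycle_iff p h).1 hc
      have hp' := hp.reverse
      have hnot' : s(v, a) ∉ p.reverse.edges := by simpa using hnot
      rw [SimpleGraph.Walk.length_cons, ← SimpleGraph.Walk.length_reverse]
      generalize p.reverse = r at hp' hnot'
      cases r with
      | nil => exact absurd rfl h.ne
      | @cons _ b _ h' q =>
        obtain ⟨hq, hvq⟩ := (SimpleGraph.Walk.cons_isPath_iff h' q).1 hp'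
        have hne : a ≠ b := by
          rintro rfl
          simp at hnot'
        set q₁ : G.Walk b a := q.transfer G (edges_of_avoid q hvq) with hq₁
        have hq₁len : q₁.length = q.length := by simp [hq₁]
        have hq₁path : q₁.IsPath := hq.transfer _
        rw [SimpleGraph.Walk.length_cons]
        rcases hv a h with ha | ha <;> rcases hv b h' with hb | hb
        · have hcyc : (SimpleGraph.Walk.cons ha.symm (SimpleGraph.Walk.cons hb q₁)).IsCycle := by
            rw [SimpleGraph.Walk.cons_isCycle_iff, SimpleGraph.Walk.cons_isPath_iff]
            refine ⟨⟨hq₁path, by simpa [hq₁] using hvq⟩, ?_⟩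
            simpa [hq₁, Sym2.eq_swap] using hnot'
          have := hG _ _ hcyc
          simpa [hq₁len] using this
        · have := hfar b hb (SimpleGraph.Walk.cons ha q₁.reverse)
          simpa [hq₁len] using this
        · have := hfar a ha (SimpleGraph.Walk.cons hb q₁)
          simpa [hq₁len] using this
        · obtain ⟨hab, hab'⟩ := hclique a ha b hb hne
          have hcyc : (SimpleGraph.Walk.cons hab q₁).IsCycle := by
            rw [SimpleGraph.Walk.cons_isCycle_iff]
            refine ⟨hq₁path, fun he => hab' (q.adj_of_mem_edges ?_)⟩
            simpa [hq₁] using he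
          have := hG _ _ hcyc
          simp only [SimpleGraph.Walk.length_cons, hq₁len] at this
          omega
  · have := hG u (w.transfer G (edges_of_avoid w hvw)) (hw.transfer _)
    simpa using this

/-- In a graph of maximum degree at most `D`, a ball of radius `r` has at most `(D + 1) ^ r`
vertices. -/
theorem ncard_ball_le {V : Type*} [Finite V] {G : SimpleGraph V} {D : ℕ}
    (hD : ∀ u, (G.neighborSet u).ncard ≤ D) (v : V) (r : ℕ) :
    {u | ∃ p : G.Walk v u, p.length ≤ r}.ncard ≤ (D + 1) ^ r := by
  classical
  have := Fintype.ofFinite V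
  induction r with
  | zero =>
    simp
  | succ r ih =>
    set B := {u | ∃ p : G.Walk v u, p.length ≤ r} with hB
    have hsub : {u | ∃ p : G.Walk v u, p.length ≤ r + 1} ⊆
        ↑(B.toFinset.biUnion fun u => insert u (G.neighborSet u).toFinset) := by
      rintro u ⟨p, hp⟩
      simp only [Finset.coe_biUnion, Set.mem_iUnion]
      rcases Nat.lt_or_ge r p.length with h | h
      · have hq : ∃ (z : V) (q : G.Walk v z) (h : G.Adj z u), p.length = q.length + 1 := by
          obtain ⟨z, hz, q, hq⟩ : ∃ (z : V) (hz : G.Adj u z) (q : G.Walk z v),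
              p.reverse = SimpleGraph.Walk.cons hz q := by
            have hl : p.reverse.length = p.length := by simp
            generalize p.reverse = p' at hl
            cases p' with
            | nil => simp at hl; omega
            | cons h q => exact ⟨_, h, q, rfl⟩
          refine ⟨z, q.reverse, hz.symm, ?_⟩
          rw [← p.length_reverse, hq]
          simp
        obtain ⟨z, q, hz, hl⟩ := hq
        exact ⟨z, by simpa [hB] using ⟨q, by omega⟩, by simp [hz]⟩
      · exact ⟨u, by simpa [hB] using ⟨p, h⟩, by simp⟩
    refine (Set.ncard_le_ncard hsub).trans ?_
    rw [Set.ncard_coe_finset, pow_succ]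
    refine (Finset.card_biUnion_le_card_mul _ _ (D + 1) fun u _ => ?_).trans ?_
    · refine (Finset.card_insert_le _ _).trans ?_
      rw [← Set.ncard_eq_toFinset_card']
      exact Nat.succ_le_succ (hD u)
    · rw [← Set.ncard_eq_toFinset_card']
      exact Nat.mul_le_mul_right _ ih

/-- Delete all edges inside `S` and join `v` to every vertex of `S`. -/
def switch {V : Type*} (G : SimpleGraph V) (v : V) (S : Set V) (hvS : v ∉ S) :
    SimpleGraph V where
  Adj a b := (G.Adj a b ∧ ¬ (a ∈ S ∧ b ∈ S)) ∨ (a = v ∧ b ∈ S) ∨ (b = v ∧ a ∈ S)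
  symm := ⟨fun a b h => by
    rcases h with ⟨h, h'⟩ | h | h
    · exact Or.inl ⟨h.symm, fun h'' => h' h''.symm⟩
    · exact Or.inr (Or.inr h)
    · exact Or.inr (Or.inl h)⟩
  loopless := ⟨fun a h => by
    rcases h with ⟨h, -⟩ | ⟨rfl, h⟩ | ⟨rfl, h⟩
    · exact G.irrefl h
    · exact hvS h
    · exact hvS h⟩

section switch

variable {V : Type*} {G : SimpleGraph V} {v : V} {S : Set V} (hvS : v ∉ S)

theorem neighborSet_switch_self : (switch G v S hvS).neighborSet v = G.neighborSet v ∪ S := by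
  ext a
  simp only [SimpleGraph.mem_neighborSet, switch, Set.mem_union]
  tauto

theorem neighborSet_switch_of_mem {s : V} (hs : s ∈ S) :
    (switch G v S hvS).neighborSet s = insert v (G.neighborSet s \ S) := by
  have hne : s ≠ v := fun h => hvS (h ▸ hs)
  ext a
  simp only [SimpleGraph.mem_neighborSet, switch, Set.mem_insert_iff, Set.mem_sdiff]
  tauto

theorem neighborSet_switch_of_notMem {u : V} (hu : u ∉ S) (huv : u ≠ v) :
    (switch G v S hvS).neighborSet u = G.neighborSet u := by
  ext a
  simp only [SimpleGraph.mem_neighborSet, switch]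
  tauto

end switch

/-- Greedy existence of graphs with prescribed minimum degree and no short cycles. -/
theorem exists_minDegree_of_pow_lt {V : Type*} [Fintype V] {d g : ℕ} (hg : 3 ≤ g)
    (hcard : (d + 2) ^ (g - 1) < Fintype.card V) :
    ∃ G : SimpleGraph V, (∀ v, d ≤ (G.neighborSet v).ncard) ∧
      ∀ (v : V) (w : G.Walk v v), w.IsCycle → g ≤ w.length := by
  classical
  set P : SimpleGraph V → Prop := fun G => (∀ v, (G.neighborSet v).ncard ≤ d + 1) ∧
    ∀ (v : V) (w : G.Walk v v), w.IsCycle → g ≤ w.length with hP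
  have hbot : P ⊥ := by
    refine ⟨fun v => ?_, fun v w hw => absurd hw ?_⟩
    · simp
    · exact SimpleGraph.isAcyclic_bot w
  obtain ⟨G, hG, hmax⟩ := (Set.toFinite {G | P G}).exists_maximalFor
    (fun G : SimpleGraph V => ∑ v, (G.neighborSet v).ncard) _ ⟨⊥, hbot⟩
  obtain ⟨hdeg, hgirth⟩ := hG
  refine ⟨G, fun v => ?_, hgirth⟩
  by_contra! hlow
  obtain ⟨x, hx⟩ : ∃ x, ∀ p : G.Walk v x, g ≤ p.length := by
    by_contra! h
    have huniv : {u | ∃ p : G.Walk v u, p.length ≤ g - 1} = Set.univ := by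
      ext u
      obtain ⟨p, hp⟩ := h u
      simpa using ⟨p, by omega⟩
    have := ncard_ball_le hdeg v (g - 1)
    rw [huniv, Set.ncard_univ, Nat.card_eq_fintype_card] at this
    exact absurd hcard (not_lt.2 this)
  obtain ⟨S, hxS, hfar, hclique, hScard, hSdeg, hSdeg'⟩ : ∃ S : Set V, x ∈ S ∧
      (∀ s ∈ S, ∀ p : G.Walk v s, g ≤ p.length + 1) ∧
      (∀ s ∈ S, ∀ t ∈ S, s ≠ t → G.Adj s t) ∧ S.ncard ≤ 2 ∧
      (∀ s ∈ S, (G.neighborSet s).ncard ≤ (G.neighborSet s \ S).ncard + 1) ∧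
      ∀ s ∈ S, (G.neighborSet s \ S).ncard ≤ d := by
    by_cases hnb : ∃ y, G.Adj x y
    · obtain ⟨y, hxy⟩ := hnb
      have key : ∀ s t : V, G.Adj s t →
          (G.neighborSet s \ {s, t}).ncard + 1 = (G.neighborSet s).ncard := by
        intro s t h
        have : G.neighborSet s \ {s, t} = G.neighborSet s \ {t} := by
          ext a
          simp only [Set.mem_sdiff, SimpleGraph.mem_neighborSet, Set.mem_insert_iff,
            Set.mem_singleton_iff, not_or]
          exact ⟨fun h => ⟨h.1, h.2.2⟩, fun h => ⟨h.1, h.1.ne', h.2⟩⟩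
        rw [this]
        exact Set.ncard_sdiff_singleton_add_one h
      have hkx := key x y hxy
      have hky := key y x hxy.symm
      rw [Set.pair_comm] at hky
      have hdx := hdeg x
      have hdy := hdeg y
      refine ⟨{x, y}, by simp, ?_, ?_, Set.ncard_insert_le _ _ |>.trans (by simp), ?_, ?_⟩
      · rintro s (rfl | rfl) p
        · exact (hx p).trans (Nat.le_succ _)
        · simpa using hx (p.concat hxy.symm)
      · rintro s (rfl | rfl) t (rfl | rfl) hst
        · exact absurd rfl hst
        · exact hxy
        · exact hxy.symm
        · exact absurd rfl hst
      · rintro s (rfl | rfl) <;> omega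
      · rintro s (rfl | rfl) <;> omega
    · have hempty : G.neighborSet x = ∅ := by
        ext a
        simpa using fun h => hnb ⟨a, h⟩
      refine ⟨{x}, rfl, ?_, ?_, by simp, ?_, ?_⟩
      · rintro s rfl p
        exact (hx p).trans (Nat.le_succ _)
      · rintro s rfl t rfl hst
        exact absurd rfl hst
      · rintro s rfl
        simp [hempty]
      · rintro s rfl
        simp [hempty]
  have hvS : v ∉ S := fun h => by
    have := hfar v h .nil
    simp at this
    omega
  have hnew : ∀ s ∈ S, ¬ G.Adj v s := fun s hs h => by
    have := hfar s hs h.toWalk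
    simp at this
    omega
  have hdisj : Disjoint (G.neighborSet v) S :=
    Set.disjoint_left.2 fun s hs hsS => hnew s hsS hs
  have hdegv : ((switch G v S hvS).neighborSet v).ncard = (G.neighborSet v).ncard + S.ncard := by
    rw [neighborSet_switch_self, Set.ncard_union_eq hdisj]
  have hdegS : ∀ s ∈ S,
      ((switch G v S hvS).neighborSet s).ncard = (G.neighborSet s \ S).ncard + 1 := by
    intro s hs
    rw [neighborSet_switch_of_mem hvS hs, Set.ncard_insert_of_notMem]
    exact fun h => hnew s hs h.1.symm
  have hSpos : 0 < S.ncard := (Set.ncard_pos).2 ⟨x, hxS⟩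
  have hP' : P (switch G v S hvS) := by
    refine ⟨fun u => ?_, le_length_of_isCycle_of_switch (v := v) (S := S) hgirth hfar ?_ ?_ ?_⟩
    · by_cases huv : u = v
      · subst huv
        omega
      by_cases huS : u ∈ S
      · have := hSdeg' u huS
        have := hdegS u huS
        omega
      · rw [neighborSet_switch_of_notMem hvS huS huv]
        exact hdeg u
    · refine fun s hs t ht hst => ⟨hclique s hs t ht hst, ?_⟩
      have : s ≠ v := fun h => hvS (h ▸ hs)
      have : t ≠ v := fun h => hvS (h ▸ ht)
      simp only [switch]
      tauto
    · intro a ha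
      simp only [switch] at ha
      tauto
    · intro a b ha hb hab
      simp only [switch] at hab
      tauto
  have hlt : ∑ u, (G.neighborSet u).ncard < ∑ u, ((switch G v S hvS).neighborSet u).ncard := by
    refine Finset.sum_lt_sum (fun u _ => ?_) ⟨v, Finset.mem_univ v, by omega⟩
    by_cases huv : u = v
    · subst huv
      omega
    by_cases huS : u ∈ S
    · rw [hdegS u huS]
      exact hSdeg u huS
    · rw [neighborSet_switch_of_notMem hvS huS huv]
  exact absurd (hmax hP' hlt.le) (not_le.2 hlt)

theorem eventually_ceil_log_pow_lt : ∀ᶠ n : ℕ in atTop,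
    (⌈Real.log n⌉₊ + 2) ^ (⌈Real.log n / (4 * Real.log (Real.log n))⌉₊ + 2) < n := by
  have hL : Tendsto (fun n : ℕ => Real.log n) atTop atTop :=
    Real.tendsto_log_atTop.comp tendsto_natCast_atTop_atTop
  have hlog : ∀ᶠ x : ℝ in atTop, Real.log x ≤ 1 / 24 * x := by
    filter_upwards [Real.isLittleO_log_id_atTop.bound (show (0 : ℝ) < 1 / 24 by norm_num),
      eventually_ge_atTop 0] with x hx hx0
    simp only [Real.norm_eq_abs, id, abs_of_nonneg hx0] at hx
    exact (le_abs_self _).trans hx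
  filter_upwards [hL.eventually hlog, hL.eventually (eventually_ge_atTop 3),
    eventually_gt_atTop 0] with n hn h3 hn0
  set L := Real.log n with hLdef
  have hn0' : (0 : ℝ) < n := by exact_mod_cast hn0
  have hl : 0 < Real.log L := Real.log_pos (by linarith)
  have hbase : (⌈L⌉₊ : ℝ) + 2 ≤ L ^ 2 := by
    have := Nat.ceil_lt_add_one (show 0 ≤ L by linarith)
    nlinarith
  have hexp : (⌈L / (4 * Real.log L)⌉₊ : ℝ) ≤ L / (4 * Real.log L) + 1 :=
    (Nat.ceil_lt_add_one (by positivity)).le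
  have hbase_log : Real.log ((⌈L⌉₊ : ℝ) + 2) ≤ 2 * Real.log L := by
    have := Real.log_le_log (by positivity) hbase
    simpa using this
  have hbase_nonneg : 0 ≤ Real.log ((⌈L⌉₊ : ℝ) + 2) :=
    Real.log_nonneg (by linarith [Nat.cast_nonneg (α := ℝ) ⌈L⌉₊])
  have key : Real.log (((⌈L⌉₊ : ℝ) + 2) ^ (⌈L / (4 * Real.log L)⌉₊ + 2)) < L := by
    rw [Real.log_pow]
    push_cast
    calc ((⌈L / (4 * Real.log L)⌉₊ : ℝ) + 2) * Real.log ((⌈L⌉₊ : ℝ) + 2)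
        ≤ (L / (4 * Real.log L) + 1 + 2) * (2 * Real.log L) := by gcongr
      _ = L / 2 + 6 * Real.log L := by field_simp; ring
      _ < L := by linarith
  have := (Real.log_lt_log_iff (by positivity) hn0').1 key
  exact_mod_cast this

theorem large_min_degree_no_short_cycles :
    ∃ n₀ : ℕ, ∀ n : ℕ, n₀ ≤ n →
      ∃ G : SimpleGraph (Fin n),
        (∀ v : Fin n, Real.log n ≤ ((G.neighborSet v).ncard : ℝ)) ∧
        ∀ (v : Fin n) (w : G.Walk v v), w.IsCycle →
          Real.log n / (4 * Real.log (Real.log n)) ≤ (w.length : ℝ) := by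
  obtain ⟨n₀, hn₀⟩ := eventually_atTop.1 eventually_ceil_log_pow_lt
  refine ⟨n₀, fun n hn => ?_⟩
  obtain ⟨G, hdeg, hgirth⟩ := exists_minDegree_of_pow_lt (V := Fin n) (d := ⌈Real.log n⌉₊)
    (g := ⌈Real.log n / (4 * Real.log (Real.log n))⌉₊ + 3) (by omega)
    (by simpa using hn₀ n hn)
  refine ⟨G, fun v => Nat.ceil_le.1 (hdeg v), fun v w hw => Nat.ceil_le.1 ?_⟩
  exact (Nat.le_add_right _ 3).trans (hgirth v w hw)

end Paper
end

section
/- For every ε > 0 there exists n₀ such that for all n ≥ n₀, every properly edge-coloured graph G on n vertices with e(G) ≥ (1−ε²)·n²/2 has a rainbow matching of size at least (1−3ε)·n/2. -/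
/-!
STATEMENT 15: For every `ε > 0` there exists `n₀` such that for all `n ≥ n₀`, every
properly edge-coloured graph `G` on `n` vertices with `e(G) ≥ (1−ε²)·n²/2` has a
rainbow matching of size at least `(1−3ε)·n/2`.
-/

namespace Paper

variable {V : Type*} {C : Type*}

/-- The edge-colouring `c` is proper on `G`: edges sharing a vertex get distinct colours. -/
def ProperColoring (G : SimpleGraph V) (c : Sym2 V → C) : Prop :=
  ∀ u v w : V, G.Adj u v → G.Adj u w → v ≠ w → c s(u, v) ≠ c s(u, w)

/-- `G` has a rainbow matching of size `k` under the colouring `c`: `k` pairwise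
vertex-disjoint edges with pairwise distinct colours. -/
def HasRainbowMatching (G : SimpleGraph V) (c : Sym2 V → C) (k : ℕ) : Prop :=
  ∃ M : Finset (Sym2 V), M.card = k ∧ (∀ e ∈ M, e ∈ G.edgeSet) ∧
    (∀ e ∈ M, ∀ f ∈ M, e ≠ f → ∀ x : V, x ∈ e → x ∉ f) ∧
    (∀ e ∈ M, ∀ f ∈ M, e ≠ f → c e ≠ c f)

/-- `M` is a rainbow matching of `G` under `c`. -/
def IsRainbowMatching (G : SimpleGraph V) (c : Sym2 V → C) (M : Finset (Sym2 V)) : Prop :=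
  (∀ e ∈ M, e ∈ G.edgeSet) ∧
    (∀ e ∈ M, ∀ f ∈ M, e ≠ f → ∀ x : V, x ∈ e → x ∉ f) ∧
    (∀ e ∈ M, ∀ f ∈ M, e ≠ f → c e ≠ c f)

theorem IsRainbowMatching.subset {G : SimpleGraph V} {c : Sym2 V → C} {M N : Finset (Sym2 V)}
    (hM : IsRainbowMatching G c M) (h : N ⊆ M) : IsRainbowMatching G c N :=
  ⟨fun e he => hM.1 e (h he), fun e he f hf => hM.2.1 e (h he) f (h hf),
    fun e he f hf => hM.2.2 e (h he) f (h hf)⟩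

/-- A rainbow matching extends by an edge of a new colour that avoids all covered vertices. -/
theorem IsRainbowMatching.insert [DecidableEq V] {G : SimpleGraph V} {c : Sym2 V → C}
    {M : Finset (Sym2 V)} (hM : IsRainbowMatching G c M) {a b : V} (hab : G.Adj a b)
    (ha : ∀ f ∈ M, a ∉ f) (hb : ∀ f ∈ M, b ∉ f) (hc : ∀ f ∈ M, c s(a, b) ≠ c f) :
    IsRainbowMatching G c (insert s(a, b) M) ∧ (insert s(a, b) M).card = M.card + 1 := by
  refine ⟨⟨?_, ?_, ?_⟩, ?_⟩
  · intro e he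
    rcases Finset.mem_insert.1 he with rfl | he
    · exact hab
    · exact hM.1 e he
  · intro e he f hf hne x hxe hxf
    rcases Finset.mem_insert.1 he with rfl | he' <;> rcases Finset.mem_insert.1 hf with rfl | hf'
    · exact hne rfl
    · rcases Sym2.mem_iff.1 hxe with rfl | rfl
      · exact ha f hf' hxf
      · exact hb f hf' hxf
    · rcases Sym2.mem_iff.1 hxf with rfl | rfl
      · exact ha e he' hxe
      · exact hb e he' hxe
    · exact hM.2.1 e he' f hf' hne x hxe hxf
  · intro e he f hf hne
    rcases Finset.mem_insert.1 he with rfl | he' <;> rcases Finset.mem_insert.1 hf with rfl | hf'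
    · exact absurd rfl hne
    · exact hc f hf'
    · exact (hc e he').symm
    · exact hM.2.2 e he' f hf' hne
  · exact Finset.card_insert_of_notMem fun h => ha _ h (Sym2.mem_mk_left a b)

/-- Replacing the edge `s(x, y)` of a rainbow matching by two edges from its ends to uncovered
vertices. -/
theorem IsRainbowMatching.exists_of_swap [DecidableEq V] {G : SimpleGraph V} {c : Sym2 V → C}
    {M : Finset (Sym2 V)} (hM : IsRainbowMatching G c M) {x y u w : V} (hxy : s(x, y) ∈ M)
    (hu : ∀ f ∈ M, u ∉ f) (hw : ∀ f ∈ M, w ∉ f) (huw : u ≠ w)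
    (hux : G.Adj u x) (hwy : G.Adj w y) (hcu : ∀ f ∈ M, c s(u, x) ≠ c f)
    (hcw : ∀ f ∈ M, c s(w, y) ≠ c f) (hcuw : c s(u, x) ≠ c s(w, y)) :
    ∃ N, IsRainbowMatching G c N ∧ N.card = M.card + 1 := by
  have hne : x ≠ y := G.ne_of_adj (hM.1 _ hxy)
  have huy : u ≠ y := fun h => hu _ hxy (h ▸ Sym2.mem_mk_right x y)
  have hwx : w ≠ x := fun h => hw _ hxy (h ▸ Sym2.mem_mk_left x y)
  have herase : ∀ z ∈ s(x, y), ∀ f ∈ M.erase s(x, y), z ∉ f := fun z hz f hf =>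
    hM.2.1 _ hxy f (Finset.mem_of_mem_erase hf) (Finset.ne_of_mem_erase hf).symm z hz
  obtain ⟨h₁, hcard₁⟩ := (hM.subset (Finset.erase_subset s(x, y) M)).insert hux
    (fun f hf => hu f (Finset.mem_of_mem_erase hf)) (herase x (Sym2.mem_mk_left x y))
    (fun f hf => hcu f (Finset.mem_of_mem_erase hf))
  obtain ⟨h₂, hcard₂⟩ := h₁.insert hwy
    (by
      intro f hf
      rcases Finset.mem_insert.1 hf with rfl | hf
      · rw [Sym2.mem_iff, not_or]
        exact ⟨huw.symm, hwx⟩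
      · exact hw f (Finset.mem_of_mem_erase hf))
    (by
      intro f hf
      rcases Finset.mem_insert.1 hf with rfl | hf
      · rw [Sym2.mem_iff, not_or]
        exact ⟨huy.symm, hne.symm⟩
      · exact herase y (Sym2.mem_mk_right x y) f hf)
    (by
      intro f hf
      rcases Finset.mem_insert.1 hf with rfl | hf
      · exact hcuw.symm
      · exact hcw f (Finset.mem_of_mem_erase hf))
  refine ⟨_, h₂, ?_⟩
  rw [hcard₂, hcard₁, Finset.card_erase_add_one hxy]

section Counting

open scoped Classical in
/-- The vertices not covered by `M`. -/
noncomputable def uncovered [Fintype V] (M : Finset (Sym2 V)) : Finset V :=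
  Finset.univ.filter fun u => ∀ f ∈ M, u ∉ f

open scoped Classical in
/-- The uncovered vertices joined to `v` by an edge whose colour does not occur in `M`. -/
noncomputable def freeNeighbors [Fintype V] (G : SimpleGraph V) (c : Sym2 V → C)
    (M : Finset (Sym2 V)) (v : V) : Finset V :=
  (uncovered M).filter fun u => G.Adj u v ∧ ∀ f ∈ M, c s(u, v) ≠ c f

variable [Fintype V] {G : SimpleGraph V} {c : Sym2 V → C} {M : Finset (Sym2 V)}

theorem mem_uncovered {u : V} : u ∈ uncovered M ↔ ∀ f ∈ M, u ∉ f := by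
  simp [uncovered]

theorem mem_freeNeighbors {u v : V} : u ∈ freeNeighbors G c M v ↔
    (∀ f ∈ M, u ∉ f) ∧ G.Adj u v ∧ ∀ f ∈ M, c s(u, v) ≠ c f := by
  simp [freeNeighbors, mem_uncovered]

theorem card_le_card_uncovered_add : Fintype.card V ≤ (uncovered M).card + 2 * M.card := by
  classical
  have hcover : (Finset.univ : Finset V) ⊆ uncovered M ∪ M.biUnion Sym2.toFinset := by
    intro v _
    by_cases hv : v ∈ uncovered M
    · exact Finset.mem_union_left _ hv
    · rw [mem_uncovered] at hv
      push Not at hv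
      obtain ⟨f, hf, hvf⟩ := hv
      exact Finset.mem_union_right _ (Finset.mem_biUnion.2 ⟨f, hf, Sym2.mem_toFinset.2 hvf⟩)
  have hbound : (M.biUnion Sym2.toFinset).card ≤ M.card * 2 :=
    Finset.card_biUnion_le_card_mul _ _ _ fun f _ => by
      rw [Sym2.card_toFinset]
      split_ifs <;> omega
  have := (Finset.card_le_card hcover).trans (Finset.card_union_le _ _)
  rw [Finset.card_univ] at this
  omega

/-- In a rainbow matching of maximum size, if one end of an edge has three free neighbours then
the other end has none. -/
theorem freeNeighbors_eq_empty (hc : ProperColoring G c) (hM : IsRainbowMatching G c M)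
    (hmax : ∀ N, IsRainbowMatching G c N → N.card ≤ M.card) {x y : V} (hxy : s(x, y) ∈ M)
    (hx : 3 ≤ (freeNeighbors G c M x).card) : freeNeighbors G c M y = ∅ := by
  classical
  rw [Finset.eq_empty_iff_forall_notMem]
  intro w hw
  have hone : ((freeNeighbors G c M x).filter fun u => c s(u, x) = c s(w, y)).card ≤ 1 := by
    rw [Finset.card_le_one]
    intro a ha b hb
    rw [Finset.mem_filter, mem_freeNeighbors] at ha hb
    by_contra hab
    apply hc x a b ha.1.2.1.symm hb.1.2.1.symm hab
    rw [Sym2.eq_swap, ha.2, ← hb.2, Sym2.eq_swap]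
  have hlt : (insert w ((freeNeighbors G c M x).filter
      fun u => c s(u, x) = c s(w, y))).card < (freeNeighbors G c M x).card :=
    (Finset.card_insert_le _ _).trans_lt (by omega)
  obtain ⟨u, hu, hu'⟩ := Finset.exists_mem_notMem_of_card_lt_card hlt
  rw [Finset.mem_insert, Finset.mem_filter, not_or, not_and] at hu'
  have hcuw := hu'.2 hu
  rw [mem_freeNeighbors] at hu hw
  obtain ⟨N, hN, hcard⟩ := hM.exists_of_swap hxy hu.1 hw.1 hu'.1 hu.2.1 hw.2.1 hu.2.2 hw.2.2 hcuw
  have := hmax N hN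
  omega

theorem card_freeNeighbors_add_le (hc : ProperColoring G c) (hM : IsRainbowMatching G c M)
    (hmax : ∀ N, IsRainbowMatching G c N → N.card ≤ M.card) (hU : 4 ≤ (uncovered M).card)
    {x y : V} (hxy : s(x, y) ∈ M) :
    (freeNeighbors G c M x).card + (freeNeighbors G c M y).card ≤ (uncovered M).card := by
  classical
  have hle : ∀ v, (freeNeighbors G c M v).card ≤ (uncovered M).card := fun v =>
    Finset.card_le_card (Finset.filter_subset _ _)
  by_cases hx : 3 ≤ (freeNeighbors G c M x).card
  · rw [freeNeighbors_eq_empty hc hM hmax hxy hx, Finset.card_empty]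
    exact hle x
  by_cases hy : 3 ≤ (freeNeighbors G c M y).card
  · rw [Sym2.eq_swap] at hxy
    rw [freeNeighbors_eq_empty hc hM hmax hxy hy, Finset.card_empty, zero_add]
    exact hle y
  omega

theorem sum_card_freeNeighbors_le (hc : ProperColoring G c) (hM : IsRainbowMatching G c M)
    (hmax : ∀ N, IsRainbowMatching G c N → N.card ≤ M.card) (hU : 4 ≤ (uncovered M).card) :
    ∑ v, (freeNeighbors G c M v).card ≤ M.card * (uncovered M).card := by
  classical
  have hzero : ∀ v ∉ M.biUnion Sym2.toFinset, (freeNeighbors G c M v).card = 0 := by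
    intro v hv
    rw [Finset.card_eq_zero, Finset.eq_empty_iff_forall_notMem]
    intro u hu
    rw [mem_freeNeighbors] at hu
    have hv' : ∀ f ∈ M, v ∉ f := fun f hf hvf =>
      hv (Finset.mem_biUnion.2 ⟨f, hf, Sym2.mem_toFinset.2 hvf⟩)
    obtain ⟨hN, hcard⟩ := hM.insert hu.2.1 hu.1 hv' hu.2.2
    have := hmax _ hN
    omega
  have hdisj : (M : Set (Sym2 V)).PairwiseDisjoint Sym2.toFinset := by
    intro e he f hf hne
    rw [Function.onFun, Finset.disjoint_left]
    intro x hxe hxf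
    exact hM.2.1 e he f hf hne x (Sym2.mem_toFinset.1 hxe) (Sym2.mem_toFinset.1 hxf)
  rw [← Finset.sum_subset (Finset.subset_univ (M.biUnion Sym2.toFinset)) fun v _ => hzero v,
    Finset.sum_biUnion hdisj, ← smul_eq_mul]
  refine Finset.sum_le_card_nsmul _ _ _ fun e he => ?_
  induction e using Sym2.ind with
  | _ x y =>
    have hne : x ≠ y := G.ne_of_adj (hM.1 _ he)
    rw [Sym2.toFinset_mk_eq, Finset.sum_pair hne]
    exact card_freeNeighbors_add_le hc hM hmax hU he

open scoped Classical in
theorem sum_degree_uncovered_le (hc : ProperColoring G c) :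
    ∑ u ∈ uncovered M, G.degree u ≤
      ∑ v, (freeNeighbors G c M v).card + (uncovered M).card * M.card := by
  have hswap : ∑ v, (freeNeighbors G c M v).card =
      ∑ u ∈ uncovered M,
        (Finset.univ.filter fun v => G.Adj u v ∧ ∀ f ∈ M, c s(u, v) ≠ c f).card := by
    simp only [freeNeighbors]
    exact (Finset.sum_card_bipartiteAbove_eq_sum_card_bipartiteBelow
      (fun u v => G.Adj u v ∧ ∀ f ∈ M, c s(u, v) ≠ c f)).symm
  rw [hswap, ← smul_eq_mul, ← Finset.sum_const, ← Finset.sum_add_distrib]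
  refine Finset.sum_le_sum fun u _ => ?_
  have hused : ((G.neighborFinset u).filter fun v => ∃ f ∈ M, c s(u, v) = c f).card ≤ M.card := by
    rw [← Finset.card_image_of_injOn (f := fun v => c s(u, v))]
    · refine (Finset.card_le_card ?_).trans (Finset.card_image_le (s := M) (f := c))
      intro d hd
      obtain ⟨v, hv, rfl⟩ := Finset.mem_image.1 hd
      obtain ⟨f, hf, hvf⟩ := (Finset.mem_filter.1 hv).2
      exact Finset.mem_image.2 ⟨f, hf, hvf.symm⟩
    · intro v hv w hw hvw
      by_contra hne
      simp only [Finset.coe_filter, Set.mem_ofPred_eq, SimpleGraph.mem_neighborFinset] at hv hw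
      exact hc u v w hv.1 hw.1 hne hvw
  rw [← SimpleGraph.card_neighborFinset_eq_degree,
    ← Finset.card_filter_add_card_filter_not (s := G.neighborFinset u)
      (fun v => ∃ f ∈ M, c s(u, v) = c f), add_comm]
  refine Nat.add_le_add (Finset.card_le_card fun v hv => ?_) hused
  simpa using hv

open scoped Classical in
theorem card_mul_card_le_sum_degree_add (U : Finset V) :
    U.card * Fintype.card V + 2 * G.edgeSet.ncard ≤
      ∑ u ∈ U, G.degree u + Fintype.card V ^ 2 := by
  have htotal : ∑ v, G.degree v = 2 * G.edgeSet.ncard := by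
    rw [G.sum_degrees_eq_twice_card_edges, ← SimpleGraph.coe_edgeFinset, Set.ncard_coe_finset]
  have hcompl : ∑ v ∈ Uᶜ, G.degree v ≤ Uᶜ.card * Fintype.card V := by
    rw [← smul_eq_mul]
    exact Finset.sum_le_card_nsmul _ _ _ fun v _ => (G.degree_lt_card_verts v).le
  have hsum := Finset.sum_add_sum_compl U fun v => G.degree v
  have hcard := Finset.card_add_card_compl U
  nlinarith

/-- The bound on the number of vertices missed by a rainbow matching of maximum size. -/
theorem card_uncovered_mul_add_le (hc : ProperColoring G c) (hM : IsRainbowMatching G c M)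
    (hmax : ∀ N, IsRainbowMatching G c N → N.card ≤ M.card) (hU : 4 ≤ (uncovered M).card) :
    (uncovered M).card * Fintype.card V + 2 * G.edgeSet.ncard ≤
      2 * (uncovered M).card * M.card + Fintype.card V ^ 2 := by
  classical
  have h₁ := card_mul_card_le_sum_degree_add (G := G) (uncovered M)
  have h₂ := sum_degree_uncovered_le (M := M) hc
  have h₃ := sum_card_freeNeighbors_le hc hM hmax hU
  nlinarith

end Counting

theorem exists_maximum_isRainbowMatching [Finite V] (G : SimpleGraph V) (c : Sym2 V → C) :
    ∃ M, IsRainbowMatching G c M ∧ ∀ N, IsRainbowMatching G c N → N.card ≤ M.card :=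
  Set.exists_max_image {M | IsRainbowMatching G c M} Finset.card (Set.toFinite _)
    ⟨∅, by simp [IsRainbowMatching]⟩

theorem rainbow_matching_of_many_edges (ε : ℝ) (hε : 0 < ε) :
    ∃ n₀ : ℕ, ∀ n : ℕ, n₀ ≤ n →
      ∀ (W : Type) [Fintype W], ∀ (D : Type) (G : SimpleGraph W) (c : Sym2 W → D),
        Fintype.card W = n → ProperColoring G c →
        (1 - ε ^ 2) * (n : ℝ) ^ 2 / 2 ≤ (G.edgeSet.ncard : ℝ) →
        ∃ k : ℕ, (1 - 3 * ε) * (n : ℝ) / 2 ≤ (k : ℝ) ∧ HasRainbowMatching G c k := by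
  obtain ⟨n₀, hn₀⟩ := exists_nat_gt (4 / (3 * ε))
  refine ⟨n₀, fun n hn W _ D G c hW hc hG => ?_⟩
  obtain ⟨M, hM, hmax⟩ := exists_maximum_isRainbowMatching G c
  refine ⟨M.card, ?_, M, rfl, hM⟩
  by_contra! hlt
  have hlarge : 4 < 3 * ε * n := by
    have h : 4 / (3 * ε) < n := hn₀.trans_le (by exact_mod_cast hn)
    rw [div_lt_iff₀ (by positivity)] at h
    linarith
  have hcover : (n : ℝ) ≤ (uncovered M).card + 2 * M.card := by
    exact_mod_cast hW ▸ card_le_card_uncovered_add (M := M)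
  have hU : 3 * ε * n < (uncovered M).card := by linarith
  have hU4 : 4 ≤ (uncovered M).card := by
    have : (4 : ℝ) ≤ (uncovered M).card := by linarith
    exact_mod_cast this
  have hcount : ((uncovered M).card * n + 2 * G.edgeSet.ncard : ℝ) ≤
      2 * (uncovered M).card * M.card + n ^ 2 := by
    exact_mod_cast hW ▸ card_uncovered_mul_add_le hc hM hmax hU4
  have hgap : 3 * ε * n < n - 2 * M.card := by linarith
  have hprod : (3 * ε * n) * (3 * ε * n) ≤ (uncovered M).card * (n - 2 * M.card) :=
    mul_le_mul hU.le hgap.le (by linarith) (by positivity)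
  nlinarith

end Paper
end
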